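/- arXiv:1511.01752 — 5 statements merged into one kernel-verified Lean document; each statement's English description precedes it below -/
import Mathlib

section
/- Let X₁,…,Xₙ be independent random variables with values in a measurable space E, let V : E → [1,∞) be measurable with E[V(X_k)²] < ∞ for each k, and let f : Eⁿ → ℝ satisfy the Lipschitz-type condition with constants L_k. Then for every λ ∈ ℝ, E[ exp( λ(f(X₁,…,Xₙ) − E[f(X₁,…,Xₙ)]) − (λ²/2) Σ_{k=1}^n L_k² ( E[V(X_k)²] + V(X_k)² ) ) ] ≤ 1. -/
open MeasureTheory ProbabilityTheory Real ENNReal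

/-!
Replacing `f` by `λ f`, take `λ = 1`, and let `W k = L k * V` be the weight of the coordinate `k`.

In one variable, `|g x - g y| ≤ W x + W y` says that each `g x - W x` is at most each `g y + W y`,
so some constant `c` satisfies `|g - c| ≤ W`. Since `exp (h - h ^ 2 / 2) ≤ 1 + h + h ^ 2 / 2`,
integrating with `h = g - c` gives
`E[exp (g - c - W ^ 2 / 2)] ≤ 1 + E[g - c] + E[W ^ 2] / 2 ≤ exp (E[g] - c + E[W ^ 2] / 2)`,
which is the claim; the centre `c` cancels.

In several variables, integrate out one coordinate by the one-variable case. The partial mean of `f`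
inherits the weights of the remaining coordinates, so induction applies.
-/

section OneVariable

theorem exp_sub_sq_div_two_le (x : ℝ) : exp (x - x ^ 2 / 2) ≤ 1 + x + x ^ 2 / 2 := by
  have pos : 0 < 1 - x + x ^ 2 / 2 := by nlinarith [sq_nonneg (x - 1)]
  have le_exp_neg : 1 - x + x ^ 2 / 2 ≤ exp (-(x - x ^ 2 / 2)) := by
    linarith [add_one_le_exp (-(x - x ^ 2 / 2))]
  -- The product of the two quadratics is `1 + x ^ 4 / 4`.
  have one_le_mul : 1 ≤ (1 + x + x ^ 2 / 2) * (1 - x + x ^ 2 / 2) := by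
    nlinarith [sq_nonneg (x ^ 2)]
  calc exp (x - x ^ 2 / 2)
    _ = (exp (-(x - x ^ 2 / 2)))⁻¹ := by rw [exp_neg, inv_inv]
    _ ≤ (1 - x + x ^ 2 / 2)⁻¹ := inv_anti₀ pos le_exp_neg
    _ ≤ 1 + x + x ^ 2 / 2 := (inv_le_iff_one_le_mul₀ pos).2 one_le_mul

theorem exists_forall_abs_sub_le_of_abs_sub_le_add {α : Type*} [Nonempty α] {g W : α → ℝ}
    (h : ∀ x y, |g x - g y| ≤ W x + W y) : ∃ c, ∀ x, |g x - c| ≤ W x := by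
  have sub_le_add (x y : α) : g x - W x ≤ g y + W y := by linarith [le_of_abs_le (h x y)]
  have bdd (x : α) : BddAbove (Set.range fun y => g y - W y) :=
    ⟨g x + W x, Set.forall_mem_range.2 fun y => sub_le_add y x⟩
  refine ⟨⨆ y, (g y - W y), fun x => abs_sub_le_iff.2 ⟨?_, ?_⟩⟩
  · linarith [le_ciSup (bdd x) x]
  · linarith [ciSup_le fun y => sub_le_add y x]

variable {α : Type*} [MeasurableSpace α] {ν : Measure α} {g W : α → ℝ}

theorem integrable_of_abs_sub_le_add [IsFiniteMeasure ν] (hg : AEStronglyMeasurable g ν)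
    (hW : Integrable W ν) (h : ∀ x y, |g x - g y| ≤ W x + W y) : Integrable g ν := by
  cases isEmpty_or_nonempty α with
  | inl _ => exact .of_isEmpty
  | inr _ =>
    obtain ⟨c, hc⟩ := exists_forall_abs_sub_le_of_abs_sub_le_add h
    have sub_const : Integrable (fun x => g x - c) ν :=
      hW.mono' (hg.sub aestronglyMeasurable_const) (.of_forall hc)
    exact (sub_const.add (integrable_const c)).congr (.of_forall fun x => sub_add_cancel _ _)

variable [IsProbabilityMeasure ν]

theorem lintegral_exp_sub_sq_div_two_le (hg : Integrable g ν) (hW : MemLp W 2 ν)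
    (h : ∀ x, |g x| ≤ W x) :
    ∫⁻ x, ENNReal.ofReal (exp (g x - W x ^ 2 / 2)) ∂ν
      ≤ ENNReal.ofReal (exp ((∫ x, g x ∂ν) + (∫ x, W x ^ 2 ∂ν) / 2)) := by
  have sq_le (x : α) : g x ^ 2 ≤ W x ^ 2 := sq_le_sq.2 ((h x).trans (le_abs_self _))
  have exp_le (x : α) : exp (g x - W x ^ 2 / 2) ≤ 1 + g x + W x ^ 2 / 2 :=
    calc exp (g x - W x ^ 2 / 2)
      _ ≤ exp (g x - g x ^ 2 / 2) := exp_le_exp.2 (by linarith [sq_le x])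
      _ ≤ 1 + g x + g x ^ 2 / 2 := exp_sub_sq_div_two_le (g x)
      _ ≤ 1 + g x + W x ^ 2 / 2 := by linarith [sq_le x]
  have int_one_add : Integrable (fun x => 1 + g x) ν := (integrable_const 1).add hg
  have int_sq : Integrable (fun x => W x ^ 2 / 2) ν := hW.integrable_sq.div_const 2
  calc ∫⁻ x, ENNReal.ofReal (exp (g x - W x ^ 2 / 2)) ∂ν
    _ ≤ ∫⁻ x, ENNReal.ofReal (1 + g x + W x ^ 2 / 2) ∂ν :=
      lintegral_mono fun x => ENNReal.ofReal_le_ofReal (exp_le x)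
    _ = ENNReal.ofReal (∫ x, (1 + g x + W x ^ 2 / 2) ∂ν) :=
      (ofReal_integral_eq_lintegral_ofReal (int_one_add.add int_sq)
        (.of_forall fun x => (exp_pos _).le.trans (exp_le x))).symm
    _ = ENNReal.ofReal (1 + (∫ x, g x ∂ν) + (∫ x, W x ^ 2 ∂ν) / 2) := by
      rw [integral_add int_one_add int_sq, integral_add (integrable_const 1) hg, integral_div]
      simp
    _ ≤ ENNReal.ofReal (exp ((∫ x, g x ∂ν) + (∫ x, W x ^ 2 ∂ν) / 2)) :=
      ENNReal.ofReal_le_ofReal (by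
        linarith [add_one_le_exp ((∫ x, g x ∂ν) + (∫ x, W x ^ 2 ∂ν) / 2)])

theorem lintegral_exp_sub_integral_le_one_of_abs_sub_le_add (hg : Integrable g ν)
    (hW : MemLp W 2 ν) (h : ∀ x y, |g x - g y| ≤ W x + W y) :
    ∫⁻ x, ENNReal.ofReal
      (exp (g x - ∫ y, g y ∂ν - ((∫ y, W y ^ 2 ∂ν) + W x ^ 2) / 2)) ∂ν ≤ 1 := by
  have : Nonempty α := nonempty_of_isProbabilityMeasure ν
  obtain ⟨c, hc⟩ := exists_forall_abs_sub_le_of_abs_sub_le_add h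
  set B := (∫ x, (g x - c) ∂ν) + (∫ x, W x ^ 2 ∂ν) / 2 with B_def
  have integral_sub_const : ∫ x, (g x - c) ∂ν = ∫ x, g x ∂ν - c := by
    simp [integral_sub hg (integrable_const c)]
  calc _ = ∫⁻ x, ENNReal.ofReal (exp (g x - c - W x ^ 2 / 2)) * ENNReal.ofReal (exp (-B)) ∂ν := by
        refine lintegral_congr fun x => ?_
        rw [← ENNReal.ofReal_mul (exp_pos _).le, ← exp_add, B_def, integral_sub_const]
        congr 2
        ring
    _ = (∫⁻ x, ENNReal.ofReal (exp (g x - c - W x ^ 2 / 2)) ∂ν) * ENNReal.ofReal (exp (-B)) :=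
      lintegral_mul_const' _ _ ENNReal.ofReal_ne_top
    _ ≤ ENNReal.ofReal (exp B) * ENNReal.ofReal (exp (-B)) := by
      gcongr
      exact lintegral_exp_sub_sq_div_two_le (hg.sub (integrable_const c)) hW hc
    _ = 1 := by simp [← ENNReal.ofReal_mul (exp_pos _).le, ← exp_add]

end OneVariable

section Fubini

variable {n : ℕ} {E : Fin (n + 1) → Type*} [∀ k, MeasurableSpace (E k)]
  (ν : ∀ k, Measure (E k)) [∀ k, SigmaFinite (ν k)] (p : Fin (n + 1))

theorem measurable_insertNth : Measurable fun z : E p × (∀ j, E (p.succAbove j)) =>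
    p.insertNth (α := E) z.1 z.2 :=
  (MeasurableEquiv.piFinSuccAbove E p).symm.measurable

theorem lintegral_pi_le_lintegral_insertNth (F : (∀ k, E k) → ℝ≥0∞) :
    ∫⁻ u, F u ∂(Measure.pi ν)
      ≤ ∫⁻ r, ∫⁻ x, F (p.insertNth x r) ∂(ν p) ∂(Measure.pi fun j => ν (p.succAbove j)) := by
  rw [(measurePreserving_piFinSuccAbove ν p).symm.lintegral_map_equiv, ← lintegral_prod_swap]
  exact lintegral_prod_le _

theorem integral_pi_eq_integral_insertNth {f : (∀ k, E k) → ℝ}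
    (hf : Integrable f (Measure.pi ν)) :
    ∫ u, f u ∂(Measure.pi ν)
      = ∫ r, ∫ x, f (p.insertNth x r) ∂(ν p) ∂(Measure.pi fun j => ν (p.succAbove j)) := by
  have mp := (measurePreserving_piFinSuccAbove ν p).symm
  rw [← mp.integral_comp']
  exact integral_prod_symm _ (mp.integrable_comp_of_integrable hf)

end Fubini

/-- The Lipschitz-type condition on a function of several variables: changing the coordinate `k`
from `x` to `y` changes `f` by at most `W k x + W k y`. The weights `W k` are arbitrary functions;
the constants `L k` and the Lyapunov function `V` correspond to `W k x = L k * V x`. -/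
def HasOscillationBound {ι : Type*} [DecidableEq ι] {E : ι → Type*} (f : (∀ i, E i) → ℝ)
    (W : ∀ i, E i → ℝ) : Prop :=
  ∀ (u : ∀ i, E i) (k : ι) (y : E k), |f u - f (Function.update u k y)| ≤ W k (u k) + W k y

namespace HasOscillationBound

section Basic

variable {ι : Type*} [DecidableEq ι] {E : ι → Type*} {f : (∀ i, E i) → ℝ} {W : ∀ i, E i → ℝ}

theorem const_mul (h : HasOscillationBound f W) (c : ℝ) :
    HasOscillationBound (fun u => c * f u) fun k x => |c| * W k x := by
  intro u k y
  rw [← mul_sub, abs_mul, ← mul_add]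
  gcongr
  exact h u k y

theorem integral {α : Type*} [MeasurableSpace α] {ν : Measure α} [IsProbabilityMeasure ν]
    {F : α → (∀ i, E i) → ℝ} (h : ∀ a, HasOscillationBound (F a) W)
    (hF : ∀ u, Integrable (fun a => F a u) ν) :
    HasOscillationBound (fun u => ∫ a, F a u ∂ν) W := by
  intro u k y
  rw [← integral_sub (hF _) (hF _)]
  have norm_le (a : α) : ‖F a u - F a (Function.update u k y)‖ ≤ W k (u k) + W k y := h a u k y
  simpa using norm_integral_le_of_norm_le_const (μ := ν) (.of_forall norm_le)

theorem abs_sub_piecewise_le (h : HasOscillationBound f W) (u v : ∀ i, E i) (s : Finset ι) :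
    |f u - f (s.piecewise v u)| ≤ ∑ k ∈ s, (W k (u k) + W k (v k)) := by
  induction s using Finset.induction_on with
  | empty => simp
  | insert k s hk ih =>
    have step := h (s.piecewise v u) k (v k)
    rw [Finset.piecewise_eq_of_notMem _ _ _ hk, ← Finset.piecewise_insert] at step
    rw [Finset.sum_insert hk]
    linarith [abs_sub_le (f u) (f (s.piecewise v u)) (f ((insert k s).piecewise v u))]

theorem abs_sub_le_sum_add_sum [Fintype ι] (h : HasOscillationBound f W) (u v : ∀ i, E i) :
    |f u - f v| ≤ ∑ k, W k (u k) + ∑ k, W k (v k) := by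
  simpa [Finset.sum_add_distrib] using h.abs_sub_piecewise_le u v Finset.univ

theorem integrable_pi [Fintype ι] [∀ i, MeasurableSpace (E i)] {ν : ∀ i, Measure (E i)}
    [∀ i, IsFiniteMeasure (ν i)] (h : HasOscillationBound f W)
    (hf : AEStronglyMeasurable f (Measure.pi ν)) (hW : ∀ k, Integrable (W k) (ν k)) :
    Integrable f (Measure.pi ν) :=
  integrable_of_abs_sub_le_add hf
    (integrable_finsetSum _ fun k _ => integrable_comp_eval (hW k)) h.abs_sub_le_sum_add_sum

end Basic

section InsertNth

variable {n : ℕ} {E : Fin (n + 1) → Type*} {f : (∀ k, E k) → ℝ} {W : ∀ k, E k → ℝ}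

theorem abs_insertNth_sub_insertNth_le (h : HasOscillationBound f W) (p : Fin (n + 1))
    (r : ∀ j, E (p.succAbove j)) (x y : E p) :
    |f (p.insertNth x r) - f (p.insertNth y r)| ≤ W p x + W p y := by
  simpa using h (p.insertNth x r) p y

theorem insertNth (h : HasOscillationBound f W) (p : Fin (n + 1)) (x : E p) :
    HasOscillationBound (fun r => f (p.insertNth x r)) fun j => W (p.succAbove j) := by
  intro r k y
  simpa using h (p.insertNth x r) (p.succAbove k) y

theorem lintegral_exp_insertNth_le [∀ k, MeasurableSpace (E k)] {ν : ∀ k, Measure (E k)}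
    (h : HasOscillationBound f W) (p : Fin (n + 1)) [IsProbabilityMeasure (ν p)]
    (r : ∀ j, E (p.succAbove j)) (hf : Integrable (fun x => f (p.insertNth x r)) (ν p))
    (hW : MemLp (W p) 2 (ν p)) (m : ℝ) :
    ∫⁻ x, ENNReal.ofReal (exp (f (p.insertNth x r) - m
        - (∑ k, ((∫ y, W k y ^ 2 ∂(ν k)) + W k (p.insertNth (α := E) x r k) ^ 2)) / 2)) ∂(ν p)
      ≤ ENNReal.ofReal (exp ((∫ x, f (p.insertNth x r) ∂(ν p)) - m
        - (∑ j, ((∫ y, W (p.succAbove j) y ^ 2 ∂(ν (p.succAbove j)))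
            + W (p.succAbove j) (r j) ^ 2)) / 2)) := by
  set B := exp ((∫ x, f (p.insertNth x r) ∂(ν p)) - m
    - (∑ j, ((∫ y, W (p.succAbove j) y ^ 2 ∂(ν (p.succAbove j)))
        + W (p.succAbove j) (r j) ^ 2)) / 2) with B_def
  calc _ = ∫⁻ x, ENNReal.ofReal (exp (f (p.insertNth x r) - ∫ y, f (p.insertNth y r) ∂(ν p)
          - ((∫ y, W p y ^ 2 ∂(ν p)) + W p x ^ 2) / 2)) * ENNReal.ofReal B ∂(ν p) := by
        refine lintegral_congr fun x => ?_
        rw [← ENNReal.ofReal_mul (exp_pos _).le, B_def, ← exp_add, Fin.sum_univ_succAbove _ p]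
        simp only [Fin.insertNth_apply_same, Fin.insertNth_apply_succAbove]
        congr 2
        ring
    _ = (∫⁻ x, ENNReal.ofReal (exp (f (p.insertNth x r) - ∫ y, f (p.insertNth y r) ∂(ν p)
          - ((∫ y, W p y ^ 2 ∂(ν p)) + W p x ^ 2) / 2)) ∂(ν p)) * ENNReal.ofReal B :=
      lintegral_mul_const' _ _ ENNReal.ofReal_ne_top
    _ ≤ ENNReal.ofReal B :=
      mul_le_of_le_one_left' <| lintegral_exp_sub_integral_le_one_of_abs_sub_le_add hf hW
        (h.abs_insertNth_sub_insertNth_le p r)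

end InsertNth

theorem lintegral_exp_sub_integral_pi_le_one {n : ℕ} {E : Fin n → Type*}
    [∀ k, MeasurableSpace (E k)] {ν : ∀ k, Measure (E k)} [∀ k, IsProbabilityMeasure (ν k)]
    {f : (∀ k, E k) → ℝ} {W : ∀ k, E k → ℝ} (h : HasOscillationBound f W) (hf : Measurable f)
    (hW : ∀ k, MemLp (W k) 2 (ν k)) :
    ∫⁻ u, ENNReal.ofReal (exp (f u - ∫ v, f v ∂(Measure.pi ν)
      - (∑ k, ((∫ x, W k x ^ 2 ∂(ν k)) + W k (u k) ^ 2)) / 2)) ∂(Measure.pi ν) ≤ 1 := by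
  induction n with
  | zero => simp [Subsingleton.elim _ (default : ∀ k, E k)]
  | succ n ih =>
    have hfz : Measurable fun z : E 0 × (∀ j, E (Fin.succAbove 0 j)) =>
        f (Fin.insertNth 0 z.1 z.2) := hf.comp (measurable_insertNth 0)
    have W_integrable (k : Fin (n + 1)) : Integrable (W k) (ν k) := (hW k).integrable one_le_two
    have section_integrable (r : ∀ j, E (Fin.succAbove 0 j)) :
        Integrable (fun x => f (Fin.insertNth 0 x r)) (ν 0) :=
      integrable_of_abs_sub_le_add (hfz.comp measurable_prodMk_right).aestronglyMeasurable
        (W_integrable 0) (h.abs_insertNth_sub_insertNth_le 0 r)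
    have partial_mean_bound := integral (h.insertNth 0) section_integrable
    have partial_mean_measurable :
        Measurable fun r => ∫ x, f (Fin.insertNth 0 x r) ∂(ν 0) :=
      hfz.stronglyMeasurable.integral_prod_left'.measurable
    have f_integrable := h.integrable_pi hf.aestronglyMeasurable W_integrable
    rw [integral_pi_eq_integral_insertNth ν 0 f_integrable]
    calc _ ≤ _ := lintegral_pi_le_lintegral_insertNth ν 0 _
      _ ≤ _ := lintegral_mono fun r =>
        h.lintegral_exp_insertNth_le 0 r (section_integrable r) (hW 0) _
      _ ≤ 1 := ih partial_mean_bound partial_mean_measurable fun j => hW _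

end HasOscillationBound

theorem exponential_inequality_independent_general {Ω : Type*} [MeasurableSpace Ω] {μ : Measure Ω}
    [IsProbabilityMeasure μ] {n : ℕ} {E : Fin n → Type*} [∀ k, MeasurableSpace (E k)]
    {X : ∀ k, Ω → E k} (hX : ∀ k, AEMeasurable (X k) μ) (hindep : iIndepFun X μ)
    {W : ∀ k, E k → ℝ} (hW : ∀ k, Measurable (W k))
    (hW2 : ∀ k, MemLp (fun ω => W k (X k ω)) 2 μ)
    {f : (∀ k, E k) → ℝ} (hf : Measurable f) (h : HasOscillationBound f W) (lam : ℝ) :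
    ∫⁻ ω, ENNReal.ofReal (exp (lam * (f (fun k => X k ω) - ∫ ω', f (fun k => X k ω') ∂μ)
      - lam ^ 2 / 2 * ∑ k, ((∫ ω', W k (X k ω') ^ 2 ∂μ) + W k (X k ω) ^ 2))) ∂μ ≤ 1 := by
  have (k : Fin n) : IsProbabilityMeasure (μ.map (X k)) := Measure.isProbabilityMeasure_map (hX k)
  have hXpi : AEMeasurable (fun ω k => X k ω) μ := aemeasurable_pi_lambda _ hX
  have weight_memLp (k : Fin n) : MemLp (fun x => |lam| * W k x) 2 (μ.map (X k)) :=
    ((memLp_map_measure_iff (hW k).aestronglyMeasurable (hX k)).2 (hW2 k)).const_mul |lam|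
  have weight_sq (k : Fin n) : ∫ x, W k x ^ 2 ∂(μ.map (X k)) = ∫ ω, W k (X k ω) ^ 2 ∂μ :=
    integral_map (hX k) ((hW k).pow_const 2).aestronglyMeasurable
  have key := (h.const_mul lam).lintegral_exp_sub_integral_pi_le_one (hf.const_mul lam) weight_memLp
  rw [← hindep.map_fun_eq_pi_map hX, lintegral_map' (by fun_prop) hXpi,
    integral_map hXpi (hf.const_mul lam).aestronglyMeasurable] at key
  simp only [mul_pow, sq_abs, integral_const_mul, weight_sq, ← mul_add, ← Finset.mul_sum] at key
  simpa only [mul_sub, mul_div_right_comm] using key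

/-- Independent-variable specialization of the paper's main inequality (Remark 1),
extending McDiarmid's inequality: if `X 1, …, X n` are independent, `V : E → [1,∞)`
with `E[V(X k)²] < ∞`, and `f` satisfies the Lipschitz-type condition
`|f(u) − f(update u k y)| ≤ L k (V (u k) + V y)`, then for every `λ ∈ ℝ`,
`E[exp(λ(f(X) − E[f(X)]) − (λ²/2) Σ_k L_k² (E[V(X k)²] + V(X k)²))] ≤ 1`. -/
theorem exponential_inequality_independent
    {E : Type*} [MeasurableSpace E]
    {Ω : Type*} [MeasurableSpace Ω] (μ : Measure Ω) [IsProbabilityMeasure μ]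
    (n : ℕ) (X : Fin n → Ω → E) (hXmeas : ∀ k, Measurable (X k))
    (hindep : ProbabilityTheory.iIndepFun X μ)
    (V : E → ℝ) (hVmeas : Measurable V) (hV1 : ∀ x, 1 ≤ V x)
    (hV2 : ∀ k, Integrable (fun ω => (V (X k ω)) ^ 2) μ)
    (f : (Fin n → E) → ℝ) (hf : Measurable f)
    (L : Fin n → ℝ) (hL : ∀ k, 0 < L k)
    (hlip : ∀ (u : Fin n → E) (k : Fin n) (y : E),
      |f u - f (Function.update u k y)| ≤ L k * (V (u k) + V y))
    (lam : ℝ) :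
    ∫⁻ ω, ENNReal.ofReal (Real.exp (lam *
        (f (fun k => X k ω) - ∫ ω', f (fun k => X k ω') ∂μ)
      - lam ^ 2 / 2 * ∑ k : Fin n,
          (L k) ^ 2 * ((∫ ω', (V (X k ω')) ^ 2 ∂μ) + (V (X k ω)) ^ 2))) ∂μ ≤ 1 := by
  have hLV (k : Fin n) : MemLp (fun ω => L k * V (X k ω)) 2 μ :=
    ((memLp_two_iff_integrable_sq (hVmeas.comp (hXmeas k)).aestronglyMeasurable).2
      (hV2 k)).const_mul (L k)
  simpa only [mul_pow, integral_const_mul, ← mul_add] using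
    exponential_inequality_independent_general (fun k => (hXmeas k).aemeasurable) hindep
      (fun k => hVmeas.const_mul (L k)) hLV hf
      (fun u k y => (hlip u k y).trans_eq (mul_add _ _ _)) lam
end

section
/- Let (W_k)_{k≥0} be a Markov chain with kernel Q̄ on a measurable space F and let V̄ : F → [2,∞) be measurable with Q̄V̄(w) ≤ βV̄(w) + 2b for all w ∈ F, where 0 < β < 1 and b > 0. Fix R ≥ 1 with β̄ := β + 2b/(1+R) < 1, let C ⊂ F be a measurable set such that V̄ ≤ 2R on C and V̄ > 1 + R on the complement of C, and let τ⁺ := inf{ k ≥ 1 : W_k ∈ C }. Then sup_{w ∈ C} E_w[ Σ_{k=1}^{τ⁺} V̄(W_k) ] ≤ 2β̄(R − 1)/(1 − β̄). -/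
open MeasureTheory ProbabilityTheory Real ENNReal
open scoped Classical

/-- `(W k)` is a time-homogeneous Markov chain on `Ω` with transition kernel `Q`. -/
def IsMarkovChain {F : Type*} [MeasurableSpace F] {Ω : Type*} [MeasurableSpace Ω]
    (μ : Measure Ω) (Q : Kernel F F) (W : ℕ → Ω → F) : Prop :=
  (∀ k, Measurable (W k)) ∧
  ∀ (k : ℕ) (g : F → ℝ), Measurable g → (∀ y, |g y| ≤ 1) →
    ∀ (h : (Fin (k + 1) → F) → ℝ), Measurable h → (∀ v, |h v| ≤ 1) →
      ∫ ω, g (W (k + 1) ω) * h (fun i => W i ω) ∂μ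
        = ∫ ω, (∫ y, g y ∂(Q (W k ω))) * h (fun i => W i ω) ∂μ

/-!
Write `r = β + 2b/(1 + R)` and `g = (V̄ - 2r) / (1 - r)`. The drift condition gives `Q̄V̄ ≤ r V̄`
off `C` and `Q̄V̄ ≤ 2rR` on `C`. Then `V̄ ≤ g` everywhere (as `V̄ ≥ 2`), and `V̄ + Q̄g ≤ g` off
`C`, so that `∑_{k ≤ n ∧ τ⁺} V̄(W_k) + g(W_{n+1}) 1_{n < τ⁺}` has nonincreasing expectation in `n`.
At `n = 0` this expectation is `Q̄g(w) ≤ (2rR - 2r) / (1 - r)`.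
-/

section Excursion

variable {F Ω : Type*}

/-- The path `(W_0, …, W_k)` of the process up to time `k`. The events observable at time `k` are
the preimages of measurable sets of paths under this map. -/
def history (W : ℕ → Ω → F) (k : ℕ) (ω : Ω) : Fin (k + 1) → F :=
  fun i => W i ω

/-- The event `{k ≤ τ⁺}` that `W` does not visit `C` at any of the times `1, …, k - 1`. -/
def noReturnBefore (W : ℕ → Ω → F) (C : Set F) (k : ℕ) : Set Ω :=
  {ω | ∀ j, 1 ≤ j → j < k → W j ω ∉ C}

/-- The sum `∑_{k=1}^{τ⁺} f(W_k)` along an excursion from `C`, where `τ⁺` is the first time `k ≥ 1`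
with `W_k ∈ C`. It is written as a sum over all `k` so that `τ⁺ = ∞` is covered. -/
noncomputable def excursionSum (W : ℕ → Ω → F) (C : Set F) (f : F → ℝ≥0∞) (ω : Ω) : ℝ≥0∞ :=
  ∑' k : ℕ, if 1 ≤ k ∧ ∀ j, 1 ≤ j → j < k → W j ω ∉ C then f (W k ω) else 0

lemma noReturnBefore_one (W : ℕ → Ω → F) (C : Set F) : noReturnBefore W C 1 = Set.univ :=
  Set.eq_univ_of_forall fun _ _ h1 h2 => absurd h2 (not_lt.2 h1)

lemma noReturnBefore_add_two (W : ℕ → Ω → F) (C : Set F) (k : ℕ) :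
    noReturnBefore W C (k + 2) = W (k + 1) ⁻¹' Cᶜ ∩ noReturnBefore W C (k + 1) := by
  ext ω
  refine ⟨fun h => ⟨h (k + 1) (by lia) (by lia), fun j h1 h2 => h j h1 (by lia)⟩, ?_⟩
  rintro ⟨hlast, hbefore⟩ j h1 h2
  obtain rfl | hj := eq_or_ne j (k + 1)
  · exact hlast
  · exact hbefore j h1 (by lia)

lemma noReturnBefore_succ_eq_history_preimage (W : ℕ → Ω → F) (C : Set F) (k : ℕ) :
    noReturnBefore W C (k + 1) =
      history W k ⁻¹' {v | ∀ i : Fin (k + 1), 1 ≤ (i : ℕ) → v i ∉ C} := by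
  ext ω
  exact ⟨fun h i h1 => h i h1 i.2, fun h j h1 h2 => h ⟨j, h2⟩ h1⟩

lemma excursionSum_eq_tsum_indicator (W : ℕ → Ω → F) (C : Set F) (f : F → ℝ≥0∞) (ω : Ω) :
    excursionSum W C f ω =
      ∑' k : ℕ, (noReturnBefore W C (k + 1)).indicator (fun ω => f (W (k + 1) ω)) ω := by
  rw [excursionSum, tsum_eq_zero_add' ENNReal.summable, if_neg (by simp), zero_add]
  simp [noReturnBefore, Set.indicator_apply]

variable [MeasurableSpace F] [MeasurableSpace Ω] {μ : Measure Ω} {Q : Kernel F F}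
  {W : ℕ → Ω → F} {C : Set F} {f g : F → ℝ≥0∞}

lemma measurableSet_noReturnBefore (hW : ∀ k, Measurable (W k)) (hC : MeasurableSet C) (k : ℕ) :
    MeasurableSet (noReturnBefore W C k) :=
  measurableSet_setOfPred.2 <| .forall fun j => .imp measurable_const <| .imp measurable_const <|
    (hC.mem.comp (hW j)).not

lemma lintegral_excursionSum (hW : ∀ k, Measurable (W k)) (hC : MeasurableSet C)
    (hf : Measurable f) :
    ∫⁻ ω, excursionSum W C f ω ∂μ =
      ∑' k : ℕ, ∫⁻ ω in noReturnBefore W C (k + 1), f (W (k + 1) ω) ∂μ := by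
  have hA := measurableSet_noReturnBefore hW hC
  have hfW (k : ℕ) : Measurable fun ω => f (W k ω) := hf.comp (hW k)
  simp_rw [excursionSum_eq_tsum_indicator]
  rw [lintegral_tsum fun k => ((hfW (k + 1)).indicator (hA (k + 1))).aemeasurable]
  simp_rw [lintegral_indicator (hA _)]

lemma measurable_history (hW : ∀ k, Measurable (W k)) (k : ℕ) : Measurable (history W k) :=
  measurable_pi_lambda _ fun i => hW i

namespace IsMarkovChain

lemma measureReal_preimage_inter_history (hchain : IsMarkovChain μ Q W) {k : ℕ}
    {B : Set (Fin (k + 1) → F)} (hB : MeasurableSet B) {S : Set F} (hS : MeasurableSet S) :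
    μ.real (W (k + 1) ⁻¹' S ∩ history W k ⁻¹' B) =
      ∫ ω in history W k ⁻¹' B, (Q (W k ω)).real S ∂μ := by
  have hA : MeasurableSet (history W k ⁻¹' B) := measurable_history hchain.1 k hB
  have abs_indicator_one_le {X : Type _} (T : Set X) (x : X) : |T.indicator (1 : X → ℝ) x| ≤ 1 := by
    by_cases hx : x ∈ T <;> simp [hx]
  have hmarkov := hchain.2 k (S.indicator 1) (measurable_one.indicator hS) (abs_indicator_one_le S)
    (B.indicator 1) (measurable_one.indicator hB) (abs_indicator_one_le B)
  simp_rw [integral_indicator_one hS] at hmarkov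
  calc μ.real (W (k + 1) ⁻¹' S ∩ history W k ⁻¹' B)
      = ∫ ω, S.indicator (1 : F → ℝ) (W (k + 1) ω) * B.indicator 1 (history W k ω) ∂μ := by
        rw [← integral_indicator_one ((hchain.1 _ hS).inter hA), Set.inter_indicator_one]
        rfl
    _ = ∫ ω, (Q (W k ω)).real S * B.indicator 1 (history W k ω) ∂μ := hmarkov
    _ = ∫ ω in history W k ⁻¹' B, (Q (W k ω)).real S ∂μ := by
        rw [← integral_indicator hA]
        simp [Set.indicator_apply]

variable [IsFiniteMeasure μ] [IsFiniteKernel Q]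

lemma measure_preimage_inter_history (hchain : IsMarkovChain μ Q W) {k : ℕ}
    {B : Set (Fin (k + 1) → F)} (hB : MeasurableSet B) {S : Set F} (hS : MeasurableSet S) :
    μ (W (k + 1) ⁻¹' S ∩ history W k ⁻¹' B) = ∫⁻ ω in history W k ⁻¹' B, Q (W k ω) S ∂μ := by
  have hint : Integrable (fun ω => (Q (W k ω)).real S) (μ.restrict (history W k ⁻¹' B)) :=
    (Kernel.IsFiniteKernel.integrable _ Q hS).comp_measurable (hchain.1 k)
  rw [← ofReal_measureReal, hchain.measureReal_preimage_inter_history hB hS,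
    ofReal_integral_eq_lintegral_ofReal hint (ae_of_all _ fun _ => measureReal_nonneg)]
  exact lintegral_congr fun _ => ofReal_measureReal

lemma map_restrict_history (hchain : IsMarkovChain μ Q W) {k : ℕ}
    {B : Set (Fin (k + 1) → F)} (hB : MeasurableSet B) :
    (μ.restrict (history W k ⁻¹' B)).map (W (k + 1)) =
      ((μ.restrict (history W k ⁻¹' B)).map (W k)).bind Q := by
  ext S hS
  rw [Measure.map_apply (hchain.1 _) hS, Measure.restrict_apply (hchain.1 _ hS),
    hchain.measure_preimage_inter_history hB hS, Measure.bind_apply hS Q.measurable.aemeasurable,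
    lintegral_map (Q.measurable_coe hS) (hchain.1 k)]

lemma setLIntegral_history_succ (hchain : IsMarkovChain μ Q W) {k : ℕ}
    {B : Set (Fin (k + 1) → F)} (hB : MeasurableSet B) (hf : Measurable f) :
    ∫⁻ ω in history W k ⁻¹' B, f (W (k + 1) ω) ∂μ =
      ∫⁻ ω in history W k ⁻¹' B, ∫⁻ v, f v ∂Q (W k ω) ∂μ := by
  rw [← lintegral_map hf (hchain.1 _), hchain.map_restrict_history hB,
    Measure.lintegral_bind Q.measurable.aemeasurable hf.aemeasurable,
    lintegral_map hf.lintegral_kernel (hchain.1 k)]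

lemma setLIntegral_noReturnBefore_succ (hchain : IsMarkovChain μ Q W) (hC : MeasurableSet C)
    (hf : Measurable f) (k : ℕ) :
    ∫⁻ ω in noReturnBefore W C (k + 1), f (W (k + 1) ω) ∂μ =
      ∫⁻ ω in noReturnBefore W C (k + 1), ∫⁻ v, f v ∂Q (W k ω) ∂μ := by
  rw [noReturnBefore_succ_eq_history_preimage]
  refine hchain.setLIntegral_history_succ ?_ hf
  exact measurableSet_setOfPred.2 <| .forall fun i =>
    .imp measurable_const (hC.mem.comp (measurable_pi_apply i)).not

lemma lintegral_comp_one (hchain : IsMarkovChain μ Q W) (hf : Measurable f) :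
    ∫⁻ ω, f (W 1 ω) ∂μ = ∫⁻ ω, ∫⁻ v, f v ∂Q (W 0 ω) ∂μ := by
  simpa using hchain.setLIntegral_history_succ (k := 0) MeasurableSet.univ hf

lemma setLIntegral_add_setLIntegral_le_of_supersolution (hchain : IsMarkovChain μ Q W)
    (hC : MeasurableSet C) (hf : Measurable f) (hg : Measurable g) (hfg : ∀ u ∈ C, f u ≤ g u)
    (hsuper : ∀ u ∉ C, f u + ∫⁻ v, g v ∂Q u ≤ g u) (k : ℕ) :
    ∫⁻ ω in noReturnBefore W C (k + 1), f (W (k + 1) ω) ∂μ +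
        ∫⁻ ω in noReturnBefore W C (k + 2), g (W (k + 2) ω) ∂μ ≤
      ∫⁻ ω in noReturnBefore W C (k + 1), g (W (k + 1) ω) ∂μ := by
  have hW : Measurable (W (k + 1)) := hchain.1 (k + 1)
  have hfW : Measurable fun ω => f (W (k + 1) ω) := hf.comp hW
  rw [hchain.setLIntegral_noReturnBefore_succ hC hg (k + 1), noReturnBefore_add_two,
    ← setLIntegral_indicator (hW hC.compl), ← lintegral_add_left hfW]
  refine lintegral_mono fun ω => ?_
  by_cases hω : W (k + 1) ω ∈ C
  · simpa [hω] using hfg _ hω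
  · simpa [hω] using hsuper _ hω

lemma sum_setLIntegral_le_of_supersolution (hchain : IsMarkovChain μ Q W)
    (hC : MeasurableSet C) (hf : Measurable f) (hg : Measurable g) (hfg : ∀ u ∈ C, f u ≤ g u)
    (hsuper : ∀ u ∉ C, f u + ∫⁻ v, g v ∂Q u ≤ g u) (n : ℕ) :
    ∑ k ∈ Finset.range n, ∫⁻ ω in noReturnBefore W C (k + 1), f (W (k + 1) ω) ∂μ +
        ∫⁻ ω in noReturnBefore W C (n + 1), g (W (n + 1) ω) ∂μ ≤
      ∫⁻ ω, g (W 1 ω) ∂μ := by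
  induction n with
  | zero => simp [noReturnBefore_one]
  | succ n ih =>
    rw [Finset.sum_range_succ, add_assoc]
    refine le_trans ?_ ih
    gcongr
    exact hchain.setLIntegral_add_setLIntegral_le_of_supersolution hC hf hg hfg hsuper n

theorem lintegral_excursionSum_le_of_supersolution (hchain : IsMarkovChain μ Q W)
    (hC : MeasurableSet C) (hf : Measurable f) (hg : Measurable g) (hfg : ∀ u ∈ C, f u ≤ g u)
    (hsuper : ∀ u ∉ C, f u + ∫⁻ v, g v ∂Q u ≤ g u) :
    ∫⁻ ω, excursionSum W C f ω ∂μ ≤ ∫⁻ ω, ∫⁻ v, g v ∂Q (W 0 ω) ∂μ := by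
  rw [lintegral_excursionSum hchain.1 hC hf, ← hchain.lintegral_comp_one hg]
  exact ENNReal.tsum_le_of_sum_range_le fun n => le_self_add.trans
    (hchain.sum_setLIntegral_le_of_supersolution hC hf hg hfg hsuper n)

end IsMarkovChain

end Excursion

section GeometricDrift

variable {F Ω : Type*} [MeasurableSpace F] [MeasurableSpace Ω] {V : F → ℝ}

lemma lintegral_ofReal_sub_div_le {ν : Measure F} [IsProbabilityMeasure ν] (hV : Measurable V)
    {c d s : ℝ} (hd : 0 ≤ d) (hs : 0 < s) (hdV : ∀ u, d ≤ V u)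
    (hle : ∫⁻ u, ENNReal.ofReal (V u) ∂ν ≤ ENNReal.ofReal c) :
    ∫⁻ u, ENNReal.ofReal ((V u - d) / s) ∂ν ≤ ENNReal.ofReal ((c - d) / s) := by
  simp_rw [ENNReal.ofReal_div_of_pos hs, ENNReal.ofReal_sub _ hd, div_eq_mul_inv]
  have hd_le : ∀ᵐ u ∂ν, ENNReal.ofReal d ≤ ENNReal.ofReal (V u) :=
    ae_of_all _ fun u => ENNReal.ofReal_le_ofReal (hdV u)
  rw [lintegral_mul_const _ (hV.ennreal_ofReal.sub_const _),
    lintegral_sub measurable_const (by simp) hd_le, lintegral_const, measure_univ, mul_one]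
  gcongr

theorem IsMarkovChain.lintegral_excursionSum_le_of_drift {μ : Measure Ω} [IsProbabilityMeasure μ]
    {Q : Kernel F F} [IsMarkovKernel Q] {W : ℕ → Ω → F} (hchain : IsMarkovChain μ Q W)
    {C : Set F} (hC : MeasurableSet C) (hV : Measurable V) {m r c : ℝ} (hm : 0 ≤ m)
    (hmV : ∀ u, m ≤ V u) (hr0 : 0 ≤ r) (hr1 : r < 1)
    (hdrift : ∀ u ∉ C, ∫⁻ v, ENNReal.ofReal (V v) ∂Q u ≤ ENNReal.ofReal (r * V u))
    (hstart : ∀ᵐ ω ∂μ, ∫⁻ v, ENNReal.ofReal (V v) ∂Q (W 0 ω) ≤ ENNReal.ofReal c) :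
    ∫⁻ ω, excursionSum W C (fun u => ENNReal.ofReal (V u)) ω ∂μ ≤
      ENNReal.ofReal ((c - r * m) / (1 - r)) := by
  have h1r : 0 < 1 - r := sub_pos.2 hr1
  have hrmV (u : F) : r * m ≤ V u := (mul_le_of_le_one_left hm hr1.le).trans (hmV u)
  let g (u : F) : ℝ≥0∞ := ENNReal.ofReal ((V u - r * m) / (1 - r))
  have lintegral_g_le {u : F} {a : ℝ}
      (ha : ∫⁻ v, ENNReal.ofReal (V v) ∂Q u ≤ ENNReal.ofReal a) :
      ∫⁻ v, g v ∂Q u ≤ ENNReal.ofReal ((a - r * m) / (1 - r)) :=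
    lintegral_ofReal_sub_div_le hV (mul_nonneg hr0 hm) h1r hrmV ha
  have hg : Measurable g := ((hV.sub_const _).div_const _).ennreal_ofReal
  have hVg (u : F) : ENNReal.ofReal (V u) ≤ g u := by
    refine ENNReal.ofReal_le_ofReal ((le_div_iff₀ h1r).2 ?_)
    linarith [mul_le_mul_of_nonneg_left (hmV u) hr0]
  have hsuper (u : F) (hu : u ∉ C) : ENNReal.ofReal (V u) + ∫⁻ v, g v ∂Q u ≤ g u := calc
    ENNReal.ofReal (V u) + ∫⁻ v, g v ∂Q u
      ≤ ENNReal.ofReal (V u) + ENNReal.ofReal ((r * V u - r * m) / (1 - r)) := by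
        gcongr
        exact lintegral_g_le (hdrift u hu)
    _ = ENNReal.ofReal (V u + (r * V u - r * m) / (1 - r)) := by
        refine (ENNReal.ofReal_add (hm.trans (hmV u)) (div_nonneg ?_ h1r.le)).symm
        exact sub_nonneg.2 (mul_le_mul_of_nonneg_left (hmV u) hr0)
    _ = g u := by
        congr 1
        field_simp
        ring
  calc ∫⁻ ω, excursionSum W C (fun u => ENNReal.ofReal (V u)) ω ∂μ
      ≤ ∫⁻ ω, ∫⁻ v, g v ∂Q (W 0 ω) ∂μ :=
        hchain.lintegral_excursionSum_le_of_supersolution hC hV.ennreal_ofReal hg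
          (fun u _ => hVg u) hsuper
    _ ≤ ∫⁻ _, ENNReal.ofReal ((c - r * m) / (1 - r)) ∂μ :=
        lintegral_mono_ae (hstart.mono fun _ => lintegral_g_le)
    _ = ENNReal.ofReal ((c - r * m) / (1 - r)) := by simp

end GeometricDrift

lemma mul_add_le_add_div_mul {β B L x y : ℝ} (hβ : 0 ≤ β) (hB : 0 ≤ B) (hL : 0 < L)
    (hxy : x ≤ y) (hLy : L ≤ y) : β * x + B ≤ (β + B / L) * y :=
  calc β * x + B = β * x + B / L * L := by rw [div_mul_cancel₀ B hL.ne']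
    _ ≤ β * y + B / L * y := by gcongr
    _ = (β + B / L) * y := (add_mul _ _ _).symm

/-- The excursion bound of the paper: if `Q̄V̄ ≤ βV̄ + 2b`, `β̄ = β + 2b/(1+R) < 1`,
`V̄ ≤ 2R` on `C`, `V̄ > 1 + R` off `C` and `τ⁺ = inf{k ≥ 1 : W k ∈ C}`, then for every
starting point `w ∈ C`, `E_w[Σ_{k=1}^{τ⁺} V̄(W k)] ≤ 2β̄(R − 1)/(1 − β̄)`.
The sum is written as `Σ_{k≥1} V̄(W k) 1_{k ≤ τ⁺}` (condition: no visit to `C` at times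
`1, …, k−1`). -/
theorem excursion_bound
    {F : Type*} [MeasurableSpace F] (Q : Kernel F F) [IsMarkovKernel Q]
    (Vb : F → ℝ) (hVmeas : Measurable Vb) (hV2 : ∀ u, 2 ≤ Vb u)
    (β b : ℝ) (hβ0 : 0 < β) (hβ1 : β < 1) (hb : 0 < b)
    (hdrift : ∀ u, ∫⁻ v, ENNReal.ofReal (Vb v) ∂(Q u) ≤ ENNReal.ofReal (β * Vb u + 2 * b))
    (R : ℝ) (hR : 1 ≤ R) (hbar : β + 2 * b / (1 + R) < 1)
    (C : Set F) (hCmeas : MeasurableSet C)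
    (hVCle : ∀ u, u ∈ C → Vb u ≤ 2 * R) (hVC : ∀ u, u ∉ C → 1 + R < Vb u)
    {Ω : Type*} [MeasurableSpace Ω] (μ : Measure Ω) [IsProbabilityMeasure μ]
    (W : ℕ → Ω → F) (hchain : IsMarkovChain μ Q W)
    (w : F) (hw : w ∈ C) (hstart : ∀ ω, W 0 ω = w) :
    ∫⁻ ω, ∑' k : ℕ, (if 1 ≤ k ∧ ∀ j, 1 ≤ j → j < k → W j ω ∉ C
        then ENNReal.ofReal (Vb (W k ω)) else 0) ∂μ
      ≤ ENNReal.ofReal (2 * (β + 2 * b / (1 + R)) * (R - 1)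
          / (1 - (β + 2 * b / (1 + R)))) := by
  have hL : 0 < 1 + R := by linarith
  have hB : 0 ≤ 2 * b := by linarith
  have drift_le {u : F} {y : ℝ} (huy : Vb u ≤ y) (hy : 1 + R ≤ y) :
      ∫⁻ v, ENNReal.ofReal (Vb v) ∂Q u ≤ ENNReal.ofReal ((β + 2 * b / (1 + R)) * y) :=
    (hdrift u).trans <| ENNReal.ofReal_le_ofReal <| mul_add_le_add_div_mul hβ0.le hB hL huy hy
  have hbound := hchain.lintegral_excursionSum_le_of_drift hCmeas hVmeas zero_le_two hV2
    (by positivity) hbar (fun u hu => drift_le le_rfl (hVC u hu).le)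
    (ae_of_all _ fun ω => hstart ω ▸ drift_le (hVCle w hw) (by linarith))
  refine hbound.trans_eq ?_
  ring_nf
end

section
/- Let (W_k)_{k≥0} be a Markov chain with kernel Q̄ on a measurable space F and let V̄ : F → [2,∞) satisfy Q̄V̄ ≤ βV̄ + 2b on F with 0 < β < 1, b > 0. Fix R ≥ 1 with β̄ := β + 2b/(1+R) < 1 and a measurable set C ⊂ F with V̄ ≤ 2R on C and V̄ > 1 + R off C. Let τ(1) := inf{k ≥ 0 : W_k ∈ C} and τ(j+1) := inf{k > τ(j) : W_k ∈ C} be the successive hitting times of C, and let (B_j)_{j≥1} be {0,1}-valued random variables that are, conditionally on the whole chain, independent with P(B_j = 1 | (W_k)) = c for a constant c ∈ (0,1]. Set τ_A := τ(J) where J := inf{j ≥ 1 : B_j = 1}. Then for every starting point w ∈ F, E_w[ Σ_{k=0}^{τ_A} V̄(W_k) ] ≤ ( V̄(w) − 2β̄R )/(1 − β̄) + 2β̄(R − 1)/( c(1 − β̄) ). -/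
/-!
Conditionally on the chain, `τ_A ≥ k` has probability `(1 - c) ^ n` with `n` the number of visits
to `C` before time `k`. Hence the expected cost is the Feynman–Kac sum
`∑ k, E[(∏ i < k, a (W i)) V̄ (W k)]` with weight `a = 1 - c` on `C` and `a = 1` off `C`, and any
`G ≥ 0` with `V̄ + a · Q̄G ≤ G` bounds it by `G w`: the partial sums plus the remainder
`E[(∏ i < n, a (W i)) G (W n)]` decrease in `n`. The drift condition gives `Q̄V̄ ≤ β̄ V̄` off
`C` and `Q̄V̄ ≤ 2β̄R` on `C`, and then the right-hand side of the theorem, as a function of `w`, is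
such a `G`: off `C` by the choice of the slope `1 / (1 - β̄)`, on `C` by the choice of the constant
term, using `V̄ ≥ 2`.
-/

open MeasureTheory ProbabilityTheory Real ENNReal
open scoped Classical

section BernoulliEvents

variable {Ω E ι : Type*} [MeasurableSpace Ω] [MeasurableSpace E] {μ : Measure Ω} {X : Ω → E}
  {A : ι → Set Ω} {p : ENNReal}

lemma iIndepSet_compl (h : iIndepSet A μ) : iIndepSet (fun i => (A i)ᶜ) μ :=
  iIndep_of_iIndep_of_le h fun i => MeasurableSpace.generateFrom_singleton_le
    (MeasurableSpace.measurableSet_generateFrom (Set.mem_singleton (A i))).compl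

/-- Conditionally on the random element `X`, the events `A i` are independent and each has
probability `p`. Conditioning is expressed by testing against the events `X ⁻¹' s`. -/
def IsCondBernoulli (μ : Measure Ω) (X : Ω → E) (A : ι → Set Ω) (p : ENNReal) : Prop :=
  ∀ (S : Finset ι) (s : Set E), MeasurableSet s →
    μ (X ⁻¹' s ∩ ⋂ i ∈ S, A i) = p ^ S.card * μ (X ⁻¹' s)

lemma isCondBernoulli_setOf_of_lintegral {B : ι → Ω → Bool} (hX : Measurable X)
    (hB : ∀ i, Measurable (B i))
    (h : ∀ (S : Finset ι) (g : E → ENNReal), Measurable g →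
      ∫⁻ ω, (∏ i ∈ S, (if B i ω = true then (1 : ENNReal) else 0)) * g (X ω) ∂μ
        = p ^ S.card * ∫⁻ ω, g (X ω) ∂μ) :
    IsCondBernoulli μ X (fun i => {ω | B i ω = true}) p := by
  intro S s hs
  have hmeas : MeasurableSet (X ⁻¹' s ∩ ⋂ i ∈ S, {ω | B i ω = true}) :=
    (hX hs).inter (S.measurableSet_biInter fun i _ => hB i (measurableSet_singleton true))
  have hprod : ∀ ω, (∏ i ∈ S, (if B i ω = true then (1 : ENNReal) else 0)) * s.indicator 1 (X ω)
      = (X ⁻¹' s ∩ ⋂ i ∈ S, {ω | B i ω = true}).indicator 1 ω := by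
    intro ω
    rw [Finset.prod_ite_zero]
    by_cases hω : X ω ∈ s <;> simp [Set.indicator, hω]
  have hpre : ∀ ω, (X ⁻¹' s).indicator (1 : Ω → ENNReal) ω = s.indicator 1 (X ω) := fun _ => rfl
  rw [← lintegral_indicator_one hmeas, ← lintegral_indicator_one (hX hs)]
  simp only [← hprod, hpre]
  exact h S (s.indicator 1) (measurable_one.indicator hs)

namespace IsCondBernoulli

lemma cond_biInter [IsFiniteMeasure μ] (h : IsCondBernoulli μ X A p) (hX : Measurable X)
    {s : Set E} (hs : MeasurableSet s) (hμs : μ (X ⁻¹' s) ≠ 0) (S : Finset ι) :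
    μ[|X ⁻¹' s] (⋂ i ∈ S, A i) = p ^ S.card := by
  rw [cond_apply (hX hs), h S s hs, mul_comm, mul_assoc,
    ENNReal.mul_inv_cancel hμs (measure_ne_top _ _), mul_one]

lemma cond_apply_eq [IsFiniteMeasure μ] (h : IsCondBernoulli μ X A p) (hX : Measurable X)
    {s : Set E} (hs : MeasurableSet s) (hμs : μ (X ⁻¹' s) ≠ 0) (i : ι) :
    μ[|X ⁻¹' s] (A i) = p := by
  simpa using h.cond_biInter hX hs hμs {i}

lemma iIndepSet_cond [IsFiniteMeasure μ] (h : IsCondBernoulli μ X A p) (hX : Measurable X)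
    (hA : ∀ i, MeasurableSet (A i)) {s : Set E} (hs : MeasurableSet s)
    (hμs : μ (X ⁻¹' s) ≠ 0) : iIndepSet A μ[|X ⁻¹' s] := by
  rw [iIndepSet_iff_meas_biInter hA]
  intro S
  simp only [h.cond_biInter hX hs hμs, h.cond_apply_eq hX hs hμs, Finset.prod_const]

lemma compl [IsFiniteMeasure μ] (h : IsCondBernoulli μ X A p) (hX : Measurable X)
    (hA : ∀ i, MeasurableSet (A i)) : IsCondBernoulli μ X (fun i => (A i)ᶜ) (1 - p) := by
  intro S s hs
  rcases eq_or_ne (μ (X ⁻¹' s)) 0 with hμs | hμs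
  · rw [measure_mono_null Set.inter_subset_left hμs, hμs, mul_zero]
  have : IsProbabilityMeasure μ[|X ⁻¹' s] := cond_isProbabilityMeasure hμs
  have hcond : μ[|X ⁻¹' s] (⋂ i ∈ S, (A i)ᶜ) = (1 - p) ^ S.card := by
    rw [(iIndepSet_compl (h.iIndepSet_cond hX hA hs hμs)).meas_biInter S]
    simp only [prob_compl_eq_one_sub (hA _), h.cond_apply_eq hX hs hμs, Finset.prod_const]
  rw [← cond_mul_eq_inter (hX hs), hcond]

lemma map_restrict_biInter (h : IsCondBernoulli μ X A p) (hX : Measurable X)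
    (S : Finset ι) :
    (μ.restrict (⋂ i ∈ S, A i)).map X = p ^ S.card • μ.map X := by
  ext s hs
  rw [Measure.map_apply hX hs, Measure.restrict_apply (hX hs), h S s hs, Measure.smul_apply,
    Measure.map_apply hX hs, smul_eq_mul]

lemma setLIntegral_biInter (h : IsCondBernoulli μ X A p) (hX : Measurable X)
    (S : Finset ι) {g : E → ENNReal} (hg : Measurable g) :
    ∫⁻ ω in ⋂ i ∈ S, A i, g (X ω) ∂μ = p ^ S.card * ∫⁻ ω, g (X ω) ∂μ := by
  rw [← lintegral_map hg hX, h.map_restrict_biInter hX, lintegral_smul_measure,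
    lintegral_map hg hX, smul_eq_mul]

end IsCondBernoulli

lemma measurableSet_forall_lt_notMem {A : ℕ → Set Ω} {N : Ω → ℕ} (hN : Measurable N)
    (hA : ∀ j, MeasurableSet (A j)) : MeasurableSet {ω | ∀ j < N ω, ω ∉ A j} := by
  rw [Set.ofPred_forall]
  exact .iInter fun j => (measurableSet_lt measurable_const hN).imp (hA j).compl

lemma lintegral_eq_tsum_setLIntegral_fiber {κ : Type*} [MeasurableSpace κ] [Countable κ]
    [MeasurableSingletonClass κ] {N : Ω → κ} (hN : Measurable N) (g : Ω → ENNReal) :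
    ∫⁻ ω, g ω ∂μ = ∑' n, ∫⁻ ω in N ⁻¹' {n}, g ω ∂μ := by
  rw [← lintegral_iUnion (fun n => hN (measurableSet_singleton n))
    (pairwise_disjoint_fiber N), ← Set.preimage_iUnion, Set.iUnion_of_singleton,
    Set.preimage_univ, setLIntegral_univ]

lemma IsCondBernoulli.lintegral_ite_forall_lt [IsFiniteMeasure μ] {A : ℕ → Set Ω}
    (h : IsCondBernoulli μ X A p) (hX : Measurable X) (hA : ∀ j, MeasurableSet (A j))
    {N : E → ℕ} (hN : Measurable N) {g : E → ENNReal} (hg : Measurable g) :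
    ∫⁻ ω, (if ∀ j < N (X ω), ω ∉ A j then g (X ω) else 0) ∂μ
      = ∫⁻ ω, (1 - p) ^ N (X ω) * g (X ω) ∂μ := by
  rw [lintegral_eq_tsum_setLIntegral_fiber (hN.comp hX),
    lintegral_eq_tsum_setLIntegral_fiber (hN.comp hX)]
  refine tsum_congr fun n => ?_
  have hfiber : MeasurableSet (N ⁻¹' {n}) := hN (measurableSet_singleton n)
  have hfiberX : MeasurableSet (N ∘ X ⁻¹' {n}) := hX hfiber
  have hunmarked : MeasurableSet (⋂ j ∈ Finset.range n, (A j)ᶜ) :=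
    Finset.measurableSet_biInter _ fun j _ => (hA j).compl
  calc ∫⁻ ω in N ∘ X ⁻¹' {n}, (if ∀ j < N (X ω), ω ∉ A j then g (X ω) else 0) ∂μ
      = ∫⁻ ω in ⋂ j ∈ Finset.range n, (A j)ᶜ, (N ⁻¹' {n}).indicator g (X ω) ∂μ := by
        rw [← lintegral_indicator hfiberX, ← lintegral_indicator hunmarked]
        refine lintegral_congr fun ω => ?_
        by_cases hω : N (X ω) = n <;> simp [Set.indicator, hω]
    _ = (1 - p) ^ n * ∫⁻ ω, (N ⁻¹' {n}).indicator g (X ω) ∂μ := by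
        rw [(h.compl hX hA).setLIntegral_biInter hX _ (hg.indicator hfiber), Finset.card_range]
    _ = (1 - p) ^ n * ∫⁻ ω in N ∘ X ⁻¹' {n}, g (X ω) ∂μ := by
        rw [← lintegral_indicator hfiberX]
        rfl
    _ = ∫⁻ ω in N ∘ X ⁻¹' {n}, (1 - p) ^ N (X ω) * g (X ω) ∂μ := by
        rw [← lintegral_const_mul _ (show Measurable fun ω => g (X ω) from hg.comp hX)]
        exact setLIntegral_congr_fun hfiberX fun ω (hω : N (X ω) = n) => by rw [hω]

end BernoulliEvents

section MarkovChain

lemma abs_indicator_one_le_one {α : Type*} (s : Set α) (x : α) :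
    |s.indicator (1 : α → ℝ) x| ≤ 1 := by
  by_cases hx : x ∈ s <;> simp [hx]

variable {F Ω : Type*} [MeasurableSpace F] [MeasurableSpace Ω] {μ : Measure Ω} {Q : Kernel F F}
  {W : ℕ → Ω → F}

namespace IsMarkovChain

lemma measurable_past (hchain : IsMarkovChain μ Q W) (k : ℕ) :
    Measurable fun ω (i : Fin (k + 1)) => W i ω :=
  measurable_pi_lambda _ fun i => hchain.1 i

lemma measurable_path (hchain : IsMarkovChain μ Q W) : Measurable fun ω k => W k ω :=
  measurable_pi_lambda _ hchain.1

lemma measureReal_past_inter_next (hchain : IsMarkovChain μ Q W) (k : ℕ)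
    {s : Set (Fin (k + 1) → F)} (hs : MeasurableSet s) {t : Set F} (ht : MeasurableSet t) :
    μ.real ((fun ω (i : Fin (k + 1)) => W i ω) ⁻¹' s ∩ W (k + 1) ⁻¹' t)
      = ∫ ω in (fun ω (i : Fin (k + 1)) => W i ω) ⁻¹' s, (Q (W k ω)).real t ∂μ := by
  have hpast := hchain.measurable_past k hs
  have hjoint (ω : Ω) :
      ((fun ω (i : Fin (k + 1)) => W i ω) ⁻¹' s ∩ W (k + 1) ⁻¹' t).indicator (1 : Ω → ℝ) ω
        = t.indicator 1 (W (k + 1) ω) * s.indicator 1 (fun i : Fin (k + 1) => W i ω) := by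
    rw [Set.inter_comm, Set.inter_indicator_one]
    rfl
  have hcond (ω : Ω) :
      ((fun ω (i : Fin (k + 1)) => W i ω) ⁻¹' s).indicator (fun ω => (Q (W k ω)).real t) ω
        = (∫ y, t.indicator 1 y ∂(Q (W k ω))) * s.indicator 1 (fun i : Fin (k + 1) => W i ω) := by
    rw [integral_indicator_one ht]
    by_cases hω : (fun i : Fin (k + 1) => W i ω) ∈ s <;> simp [Set.indicator, hω]
  rw [← integral_indicator_one (hpast.inter (hchain.1 (k + 1) ht)), ← integral_indicator hpast]
  simp only [hjoint, hcond]
  exact hchain.2 k (t.indicator 1) (measurable_one.indicator ht) (abs_indicator_one_le_one t)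
    (s.indicator 1) (measurable_one.indicator hs) (abs_indicator_one_le_one s)

lemma measure_past_inter_next [IsFiniteMeasure μ] [IsFiniteKernel Q]
    (hchain : IsMarkovChain μ Q W) (k : ℕ) {s : Set (Fin (k + 1) → F)} (hs : MeasurableSet s)
    {t : Set F} (ht : MeasurableSet t) :
    μ ((fun ω (i : Fin (k + 1)) => W i ω) ⁻¹' s ∩ W (k + 1) ⁻¹' t)
      = ∫⁻ ω in (fun ω (i : Fin (k + 1)) => W i ω) ⁻¹' s, Q (W k ω) t ∂μ := by
  have hQt : Measurable fun ω => Q (W k ω) t := (Q.measurable_coe ht).comp (hchain.1 k)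
  have hfin : ∫⁻ ω in (fun ω (i : Fin (k + 1)) => W i ω) ⁻¹' s, Q (W k ω) t ∂μ ≠ ⊤ :=
    ((setLIntegral_mono' (hchain.measurable_past k hs) fun ω _ => Q.measure_le_bound _ t).trans_lt
      (setLIntegral_const_lt_top _ Q.bound_ne_top)).ne
  rw [← ENNReal.toReal_eq_toReal_iff' (measure_ne_top _ _) hfin,
    ← integral_toReal hQt.aemeasurable (.of_forall fun ω => measure_lt_top _ _)]
  exact hchain.measureReal_past_inter_next k hs ht

lemma map_past_prodMk_next [IsFiniteMeasure μ] [IsFiniteKernel Q]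
    (hchain : IsMarkovChain μ Q W) (k : ℕ) :
    μ.map (fun ω => ((fun i : Fin (k + 1) => W i ω), W (k + 1) ω))
      = μ.map (fun ω (i : Fin (k + 1)) => W i ω)
        ⊗ₘ Q.comap (fun v => v (Fin.last k)) (measurable_pi_apply _) := by
  have hpast := hchain.measurable_past k
  refine Measure.ext_prod fun hs ht => ?_
  rw [Measure.compProd_apply_prod hs ht,
    Measure.map_apply (hpast.prodMk (hchain.1 (k + 1))) (hs.prod ht),
    setLIntegral_map hs (Kernel.measurable_coe _ ht) hpast]
  exact hchain.measure_past_inter_next k hs ht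

lemma lintegral_past_mul_next [IsFiniteMeasure μ] [IsFiniteKernel Q]
    (hchain : IsMarkovChain μ Q W) (k : ℕ) {H : (Fin (k + 1) → F) → ENNReal} (hH : Measurable H)
    {G : F → ENNReal} (hG : Measurable G) :
    ∫⁻ ω, H (fun i => W i ω) * G (W (k + 1) ω) ∂μ
      = ∫⁻ ω, H (fun i => W i ω) * ∫⁻ y, G y ∂(Q (W k ω)) ∂μ := by
  have hpast := hchain.measurable_past k
  have hHG : Measurable fun v : (Fin (k + 1) → F) × F => H v.1 * G v.2 := by fun_prop
  rw [← lintegral_map hHG (hpast.prodMk (hchain.1 (k + 1))), hchain.map_past_prodMk_next k,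
    Measure.lintegral_compProd hHG, lintegral_map hHG.lintegral_kernel_prod_right' hpast]
  simp only [lintegral_const_mul _ hG, Kernel.comap_apply, Fin.val_last]

lemma sum_lintegral_prod_mul_add_le [IsFiniteMeasure μ] [IsFiniteKernel Q]
    (hchain : IsMarkovChain μ Q W) {a f G : F → ENNReal} (ha : Measurable a) (hf : Measurable f)
    (hG : Measurable G) (hsuper : ∀ u, f u + a u * ∫⁻ v, G v ∂(Q u) ≤ G u) (n : ℕ) :
    ∑ k ∈ Finset.range n, ∫⁻ ω, (∏ i ∈ Finset.range k, a (W i ω)) * f (W k ω) ∂μ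
        + ∫⁻ ω, (∏ i ∈ Finset.range n, a (W i ω)) * G (W n ω) ∂μ
      ≤ ∫⁻ ω, G (W 0 ω) ∂μ := by
  have hW : ∀ i, Measurable (W i) := hchain.1
  induction n with
  | zero => simp
  | succ n ih =>
    refine le_trans ?_ ih
    rw [Finset.sum_range_succ, add_assoc]
    gcongr
    calc ∫⁻ ω, (∏ i ∈ Finset.range n, a (W i ω)) * f (W n ω) ∂μ
          + ∫⁻ ω, (∏ i ∈ Finset.range (n + 1), a (W i ω)) * G (W (n + 1) ω) ∂μ
        = ∫⁻ ω, (∏ i ∈ Finset.range n, a (W i ω)) * f (W n ω) ∂μ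
          + ∫⁻ ω, (∏ i ∈ Finset.range (n + 1), a (W i ω)) * ∫⁻ v, G v ∂(Q (W n ω)) ∂μ := by
          have hweight : Measurable fun v : Fin (n + 1) → F => ∏ i, a (v i) := by fun_prop
          have hstep := hchain.lintegral_past_mul_next n hweight hG
          simp only [Finset.prod_range, hstep]
      _ = ∫⁻ ω, (∏ i ∈ Finset.range n, a (W i ω))
            * (f (W n ω) + a (W n ω) * ∫⁻ v, G v ∂(Q (W n ω))) ∂μ := by
          rw [← lintegral_add_left (by fun_prop)]
          simp only [Finset.prod_range_succ, mul_add, mul_assoc]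
      _ ≤ ∫⁻ ω, (∏ i ∈ Finset.range n, a (W i ω)) * G (W n ω) ∂μ := by
          gcongr with ω
          exact hsuper (W n ω)

lemma tsum_lintegral_prod_mul_le [IsFiniteMeasure μ] [IsFiniteKernel Q]
    (hchain : IsMarkovChain μ Q W) {a f G : F → ENNReal} (ha : Measurable a) (hf : Measurable f)
    (hG : Measurable G) (hsuper : ∀ u, f u + a u * ∫⁻ v, G v ∂(Q u) ≤ G u) :
    ∑' k, ∫⁻ ω, (∏ i ∈ Finset.range k, a (W i ω)) * f (W k ω) ∂μ ≤ ∫⁻ ω, G (W 0 ω) ∂μ := by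
  rw [ENNReal.tsum_eq_iSup_nat]
  exact iSup_le fun n =>
    le_self_add.trans (hchain.sum_lintegral_prod_mul_add_le ha hf hG hsuper n)

end IsMarkovChain

end MarkovChain

section Visits

lemma forall_lt_imp_count_iff (p P : ℕ → Prop) (k : ℕ) :
    (∀ m < k, p m → P (Nat.count p m)) ↔ ∀ j < Nat.count p k, P j := by
  induction k with
  | zero => simp
  | succ k ih =>
    rw [Nat.forall_lt_succ_right, ih, Nat.count_succ]
    split_ifs with hk
    · rw [Nat.forall_lt_succ_right]
      simp only [hk, forall_const]
    · simp only [hk, false_imp_iff, and_true, add_zero]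

lemma prod_range_ite_eq_pow_count {M : Type*} [CommMonoid M] (p : ℕ → Prop) (q : M) (k : ℕ) :
    ∏ i ∈ Finset.range k, (if p i then q else 1) = q ^ Nat.count p k := by
  rw [← Finset.prod_filter, Finset.prod_const, Nat.count_eq_card_filter_range]

variable {F Ω : Type*} [MeasurableSpace F] [MeasurableSpace Ω] {μ : Measure Ω} {Q : Kernel F F}
  {W : ℕ → Ω → F}

lemma measurable_count_mem {C : Set F} (hC : MeasurableSet C) (k : ℕ) :
    Measurable fun x : ℕ → F => Nat.count (fun i => x i ∈ C) k := by
  simp only [Nat.count_eq_card_filter_range, Finset.card_filter]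
  exact Finset.measurable_fun_sum _ fun i _ =>
    .ite (measurable_pi_apply i hC) measurable_const measurable_const

theorem IsMarkovChain.lintegral_tsum_unmarked_le [IsFiniteMeasure μ] [IsFiniteKernel Q]
    (hchain : IsMarkovChain μ Q W) {A : ℕ → Set Ω} (hA : ∀ j, MeasurableSet (A j)) {p : ENNReal}
    (hmarks : IsCondBernoulli μ (fun ω k => W k ω) A p) {C : Set F} (hC : MeasurableSet C)
    {f G : F → ENNReal} (hf : Measurable f) (hG : Measurable G)
    (hsuper : ∀ u, f u + (if u ∈ C then 1 - p else 1) * ∫⁻ v, G v ∂(Q u) ≤ G u) :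
    ∫⁻ ω, ∑' k, (if ∀ m < k, W m ω ∈ C → ω ∉ A (Nat.count (fun i => W i ω ∈ C) m)
        then f (W k ω) else 0) ∂μ
      ≤ ∫⁻ ω, G (W 0 ω) ∂μ := by
  have hpath := hchain.measurable_path
  have hterm (k : ℕ) : Measurable fun ω =>
      (if ∀ j < Nat.count (fun i => W i ω ∈ C) k, ω ∉ A j then f (W k ω) else 0) :=
    .ite (measurableSet_forall_lt_notMem ((measurable_count_mem hC k).comp hpath) hA)
      (hf.comp (hchain.1 k)) measurable_const
  calc _ = ∫⁻ ω, ∑' k,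
          (if ∀ j < Nat.count (fun i => W i ω ∈ C) k, ω ∉ A j then f (W k ω) else 0) ∂μ :=
        lintegral_congr fun ω => tsum_congr fun k =>
          if_congr (forall_lt_imp_count_iff _ (fun j => ω ∉ A j) k) rfl rfl
    _ = ∑' k, ∫⁻ ω,
          (if ∀ j < Nat.count (fun i => W i ω ∈ C) k, ω ∉ A j then f (W k ω) else 0) ∂μ :=
        lintegral_tsum fun k => (hterm k).aemeasurable
    _ = ∑' k, ∫⁻ ω, (1 - p) ^ Nat.count (fun i => W i ω ∈ C) k * f (W k ω) ∂μ :=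
        tsum_congr fun k => hmarks.lintegral_ite_forall_lt hpath hA (measurable_count_mem hC k)
          (hf.comp (measurable_pi_apply k))
    _ = ∑' k, ∫⁻ ω, (∏ i ∈ Finset.range k, if W i ω ∈ C then 1 - p else 1) * f (W k ω) ∂μ := by
        simp only [prod_range_ite_eq_pow_count]
    _ ≤ ∫⁻ ω, G (W 0 ω) ∂μ :=
        hchain.tsum_lintegral_prod_mul_le (.ite hC measurable_const measurable_const) hf hG hsuper

end Visits

section Drift

/-- The bound on the expected total of `V` up to regeneration for a chain started where `V = x`,
when `QV ≤ r V` off the set `C`, `QV ≤ M` on `C`, `ℓ ≤ V` everywhere, and each visit to `C`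
regenerates with probability `c`. In the paper `r = β̄`, `M = 2β̄R` and `ℓ = 2`. -/
noncomputable def atomPotential (r M ℓ c x : ℝ) : ℝ :=
  (x - M) / (1 - r) + (M - r * ℓ) / (c * (1 - r))

section Real

variable {r M ℓ c x : ℝ}

lemma atomPotential_nonneg (hr1 : r < 1) (hc0 : 0 < c) (hc1 : c ≤ 1) (hM : r * ℓ ≤ M)
    (hx : r * ℓ ≤ x) : 0 ≤ atomPotential r M ℓ c x := by
  have h1r : 0 < 1 - r := by linarith
  have hdiv : (M - r * ℓ) / (1 - r) ≤ (M - r * ℓ) / (c * (1 - r)) :=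
    div_le_div_of_nonneg_left (by linarith) (by positivity) (mul_le_of_le_one_left h1r.le hc1)
  calc 0 ≤ (x - r * ℓ) / (1 - r) := div_nonneg (by linarith) h1r.le
    _ = (x - M) / (1 - r) + (M - r * ℓ) / (1 - r) := by ring
    _ ≤ atomPotential r M ℓ c x := by unfold atomPotential; gcongr

lemma self_add_atomPotential_mul (hr1 : r < 1) :
    x + atomPotential r M ℓ c (r * x) = atomPotential r M ℓ c x := by
  have h1r : 1 - r ≠ 0 := by linarith
  unfold atomPotential
  field_simp
  ring

lemma self_add_mul_atomPotential_le (hr0 : 0 ≤ r) (hr1 : r < 1) (hc0 : 0 < c) (hx : ℓ ≤ x) :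
    x + (1 - c) * atomPotential r M ℓ c M ≤ atomPotential r M ℓ c x := by
  have h1r : 0 < 1 - r := by linarith
  have hgap : atomPotential r M ℓ c x - (x + (1 - c) * atomPotential r M ℓ c M)
      = r * (x - ℓ) / (1 - r) := by
    unfold atomPotential
    field_simp
    ring
  have : 0 ≤ r * (x - ℓ) / (1 - r) := div_nonneg (mul_nonneg hr0 (by linarith)) h1r.le
  linarith

end Real

variable {F : Type*} [MeasurableSpace F]

lemma lintegral_ofReal_mul_add_le {ν : Measure F} [IsProbabilityMeasure ν] {V : F → ℝ}
    (hV : Measurable V) (hV0 : ∀ v, 0 ≤ V v) {t : ℝ} (ht : 0 ≤ t)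
    (hVt : ∫⁻ v, ENNReal.ofReal (V v) ∂ν ≤ ENNReal.ofReal t) {a d : ℝ} (ha : 0 ≤ a)
    (had : ∀ v, 0 ≤ a * V v + d) :
    ∫⁻ v, ENNReal.ofReal (a * V v + d) ∂ν ≤ ENNReal.ofReal (a * t + d) := by
  have hint : Integrable V ν :=
    (lintegral_ofReal_ne_top_iff_integrable hV.aestronglyMeasurable (.of_forall hV0)).1
      (ne_top_of_le_ne_top ENNReal.ofReal_ne_top hVt)
  have hmean : ∫ v, V v ∂ν ≤ t := by
    rwa [← ENNReal.ofReal_le_ofReal_iff ht,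
      ofReal_integral_eq_lintegral_ofReal hint (.of_forall hV0)]
  have hint' : Integrable (fun v => a * V v + d) ν := (hint.const_mul a).add (integrable_const d)
  calc ∫⁻ v, ENNReal.ofReal (a * V v + d) ∂ν = ENNReal.ofReal (∫ v, (a * V v + d) ∂ν) :=
        (ofReal_integral_eq_lintegral_ofReal hint' (.of_forall had)).symm
    _ = ENNReal.ofReal (a * ∫ v, V v ∂ν + d) := by
        rw [integral_add (hint.const_mul a) (integrable_const d), integral_const_mul,
          integral_const, probReal_univ, one_smul]
    _ ≤ ENNReal.ofReal (a * t + d) := by gcongr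

lemma lintegral_ofReal_atomPotential_le {ν : Measure F} [IsProbabilityMeasure ν] {V : F → ℝ}
    {r M ℓ c t : ℝ} (hV : Measurable V) (hℓ : 0 ≤ ℓ) (hVℓ : ∀ v, ℓ ≤ V v) (hr1 : r < 1)
    (hc0 : 0 < c) (hc1 : c ≤ 1) (hM : r * ℓ ≤ M) (ht : 0 ≤ t)
    (hVt : ∫⁻ v, ENNReal.ofReal (V v) ∂ν ≤ ENNReal.ofReal t) :
    ∫⁻ v, ENNReal.ofReal (atomPotential r M ℓ c (V v)) ∂ν
      ≤ ENNReal.ofReal (atomPotential r M ℓ c t) := by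
  have haffine (x : ℝ) : atomPotential r M ℓ c x
      = (1 - r)⁻¹ * x + ((M - r * ℓ) / (c * (1 - r)) - M / (1 - r)) := by
    unfold atomPotential
    ring
  have hnonneg (v : F) : 0 ≤ atomPotential r M ℓ c (V v) :=
    atomPotential_nonneg hr1 hc0 hc1 hM ((mul_le_of_le_one_left hℓ hr1.le).trans (hVℓ v))
  simp only [haffine] at hnonneg ⊢
  exact lintegral_ofReal_mul_add_le hV (fun v => hℓ.trans (hVℓ v)) ht hVt
    (inv_nonneg.2 (by linarith)) hnonneg

lemma atomPotential_superharmonic {Q : Kernel F F} [IsMarkovKernel Q] {V : F → ℝ} {C : Set F}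
    {r M ℓ c : ℝ} (hV : Measurable V) (hℓ : 0 ≤ ℓ) (hVℓ : ∀ v, ℓ ≤ V v) (hr0 : 0 ≤ r)
    (hr1 : r < 1) (hc0 : 0 < c) (hc1 : c ≤ 1) (hM : r * ℓ ≤ M)
    (hon : ∀ u ∈ C, ∫⁻ v, ENNReal.ofReal (V v) ∂(Q u) ≤ ENNReal.ofReal M)
    (hoff : ∀ u ∉ C, ∫⁻ v, ENNReal.ofReal (V v) ∂(Q u) ≤ ENNReal.ofReal (r * V u)) (u : F) :
    ENNReal.ofReal (V u) + (if u ∈ C then 1 - ENNReal.ofReal c else 1)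
        * ∫⁻ v, ENNReal.ofReal (atomPotential r M ℓ c (V v)) ∂(Q u)
      ≤ ENNReal.ofReal (atomPotential r M ℓ c (V u)) := by
  have hVu : 0 ≤ V u := hℓ.trans (hVℓ u)
  split_ifs with hu
  · have hQ := lintegral_ofReal_atomPotential_le hV hℓ hVℓ hr1 hc0 hc1 hM
      ((mul_nonneg hr0 hℓ).trans hM) (hon u hu)
    have hpot : 0 ≤ (1 - c) * atomPotential r M ℓ c M :=
      mul_nonneg (by linarith) (atomPotential_nonneg hr1 hc0 hc1 hM hM)
    calc _ ≤ ENNReal.ofReal (V u) + (1 - ENNReal.ofReal c)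
          * ENNReal.ofReal (atomPotential r M ℓ c M) := by gcongr
      _ = ENNReal.ofReal (V u + (1 - c) * atomPotential r M ℓ c M) := by
        rw [ENNReal.ofReal_add hVu hpot, ENNReal.ofReal_mul (by linarith),
          ENNReal.ofReal_sub 1 hc0.le, ENNReal.ofReal_one]
      _ ≤ _ := ENNReal.ofReal_le_ofReal (self_add_mul_atomPotential_le hr0 hr1 hc0 (hVℓ u))
  · have hQ := lintegral_ofReal_atomPotential_le hV hℓ hVℓ hr1 hc0 hc1 hM
      (mul_nonneg hr0 hVu) (hoff u hu)
    have hpot : 0 ≤ atomPotential r M ℓ c (r * V u) :=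
      atomPotential_nonneg hr1 hc0 hc1 hM (mul_le_mul_of_nonneg_left (hVℓ u) hr0)
    calc _ ≤ ENNReal.ofReal (V u) + ENNReal.ofReal (atomPotential r M ℓ c (r * V u)) := by
          rw [one_mul]
          gcongr
      _ = ENNReal.ofReal (atomPotential r M ℓ c (V u)) := by
        rw [← ENNReal.ofReal_add hVu hpot, self_add_atomPotential_mul hr1]

lemma affine_drift_le_mul {β b R x : ℝ} (hb : 0 ≤ b) (hR : -1 < R) (hx : 1 + R ≤ x) :
    β * x + 2 * b ≤ (β + 2 * b / (1 + R)) * x := by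
  have h1R : 0 < 1 + R := by linarith
  have : 2 * b ≤ 2 * b / (1 + R) * x := by
    rw [div_mul_eq_mul_div, le_div_iff₀ h1R]
    gcongr
  linarith

lemma affine_drift_le_two_mul {β b R x : ℝ} (hβ : 0 ≤ β) (hb : 0 ≤ b) (hR : 1 ≤ R)
    (hx : x ≤ 2 * R) : β * x + 2 * b ≤ (β + 2 * b / (1 + R)) * (2 * R) :=
  calc β * x + 2 * b ≤ β * (2 * R) + 2 * b := by gcongr
    _ ≤ (β + 2 * b / (1 + R)) * (2 * R) := affine_drift_le_mul hb (by linarith) (by linarith)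

end Drift

/-- Nummelin-splitting bound of the paper: with regeneration marks `B j` that are,
conditionally on the whole chain, iid Bernoulli(`c`) (expressed by the product formula
against every nonnegative measurable functional of the chain), and `τ_A` the time of
the first visit to `C` carrying a mark `1` (the `J`-th visit to `C`, `J` the first
index with `B J = 1`), one has
`E_w[Σ_{k=0}^{τ_A} V̄(W k)] ≤ (V̄(w) − 2β̄R)/(1 − β̄) + 2β̄(R − 1)/(c(1 − β̄))`.
The event `k ≤ τ_A` is: no time `m < k` is a visit to `C` whose mark equals `1`;
the mark attached to a visit at time `m` is `B (v + 1)` where `v` is the number of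
visits to `C` before time `m`. -/
theorem atom_hitting_time_bound
    {F : Type*} [MeasurableSpace F] (Q : Kernel F F) [IsMarkovKernel Q]
    (Vb : F → ℝ) (hVmeas : Measurable Vb) (hV2 : ∀ u, 2 ≤ Vb u)
    (β b : ℝ) (hβ0 : 0 < β) (hβ1 : β < 1) (hb : 0 < b)
    (hdrift : ∀ u, ∫⁻ v, ENNReal.ofReal (Vb v) ∂(Q u) ≤ ENNReal.ofReal (β * Vb u + 2 * b))
    (R : ℝ) (hR : 1 ≤ R) (hbar : β + 2 * b / (1 + R) < 1)
    (C : Set F) (hCmeas : MeasurableSet C)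
    (hVCle : ∀ u, u ∈ C → Vb u ≤ 2 * R) (hVC : ∀ u, u ∉ C → 1 + R < Vb u)
    (c : ℝ) (hc0 : 0 < c) (hc1 : c ≤ 1)
    {Ω : Type*} [MeasurableSpace Ω] (μ : Measure Ω) [IsProbabilityMeasure μ]
    (W : ℕ → Ω → F) (hchain : IsMarkovChain μ Q W)
    (B : ℕ → Ω → Bool) (hBmeas : ∀ j, Measurable (B j))
    -- conditionally on the whole chain, the marks `B j`, `j ≥ 1`, are iid Bernoulli(c)
    (hBernoulli : ∀ S : Finset ℕ, (∀ j ∈ S, 1 ≤ j) →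
      ∀ h : (ℕ → F) → ENNReal, Measurable h →
        ∫⁻ ω, (∏ j ∈ S, (if B j ω = true then (1 : ENNReal) else 0))
            * h (fun k => W k ω) ∂μ
          = ENNReal.ofReal c ^ S.card * ∫⁻ ω, h (fun k => W k ω) ∂μ)
    (w : F) (hstart : ∀ ω, W 0 ω = w) :
    ∫⁻ ω, ∑' k : ℕ,
        (if ∀ m < k, W m ω ∈ C →
            B (((Finset.range m).filter (fun i => W i ω ∈ C)).card + 1) ω = false
          then ENNReal.ofReal (Vb (W k ω)) else 0) ∂μ
      ≤ ENNReal.ofReal ((Vb w - 2 * (β + 2 * b / (1 + R)) * R)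
            / (1 - (β + 2 * b / (1 + R)))
          + 2 * (β + 2 * b / (1 + R)) * (R - 1)
            / (c * (1 - (β + 2 * b / (1 + R))))) := by
  set r := β + 2 * b / (1 + R)
  have hr0 : 0 ≤ r := by positivity
  have hmarks : IsCondBernoulli μ (fun ω k => W k ω) (fun j => {ω | B (j + 1) ω = true})
      (ENNReal.ofReal c) :=
    isCondBernoulli_setOf_of_lintegral hchain.measurable_path (fun j => hBmeas (j + 1))
      fun S h hh => by simpa using hBernoulli (S.map (addRightEmbedding 1)) (by simp) h hh
  have hon (u : F) (hu : u ∈ C) :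
      ∫⁻ v, ENNReal.ofReal (Vb v) ∂(Q u) ≤ ENNReal.ofReal (r * (2 * R)) :=
    (hdrift u).trans (ENNReal.ofReal_le_ofReal
      (affine_drift_le_two_mul hβ0.le hb.le hR (hVCle u hu)))
  have hoff (u : F) (hu : u ∉ C) :
      ∫⁻ v, ENNReal.ofReal (Vb v) ∂(Q u) ≤ ENNReal.ofReal (r * Vb u) :=
    (hdrift u).trans (ENNReal.ofReal_le_ofReal
      (affine_drift_le_mul hb.le (by linarith) (hVC u hu).le))
  have hsuper := atomPotential_superharmonic hVmeas zero_le_two hV2 hr0 hbar hc0 hc1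
    (mul_le_mul_of_nonneg_left (by linarith) hr0) hon hoff
  have hbound := hchain.lintegral_tsum_unmarked_le
    (fun j => hBmeas (j + 1) (measurableSet_singleton true)) hmarks hCmeas
    hVmeas.ennreal_ofReal (by unfold atomPotential; fun_prop) hsuper
  have hvalue : atomPotential r (r * (2 * R)) 2 c (Vb w)
      = (Vb w - 2 * r * R) / (1 - r) + 2 * r * (R - 1) / (c * (1 - r)) := by
    unfold atomPotential
    ring
  simpa [hstart, hvalue, Nat.count_eq_card_filter_range] using hbound
end

section
/- Let μ and ν be probability measures on a measurable space E, let V : E → [1,∞) be measurable with ∫V² dμ < ∞ and ∫V² dν < ∞, and let d_V(u,v) := (V(u)+V(v))·1_{u≠v}. Define W_{1,d_V}(μ,ν) := inf_π E_π[d_V(X,Y)], the infimum over all couplings π of μ and ν. Then for all constants c > 0 and λ > 0, c · W_{1,d_V}(μ, ν) ≤ (λc²/2)( ∫V² dμ + ∫V² dν ) + λ⁻¹ · KL(ν, μ), where KL(ν, μ) = ∫ log(dν/dμ) dν is the Kullback–Leibler divergence (equal to +∞ if ν is not absolutely continuous with respect to μ). -/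
open MeasureTheory ProbabilityTheory Real ENNReal
open scoped Classical

/-- The Kullback–Leibler divergence `KL(ν, μ) = ∫ log(dν/dμ) dν`, equal to `∞` if `ν`
is not absolutely continuous with respect to `μ` (or the integral is not defined). -/
noncomputable def klDiv {E : Type*} [MeasurableSpace E] (ν μ : Measure E) : ENNReal :=
  if ν ≪ μ ∧ Integrable (llr ν μ) ν then ENNReal.ofReal (∫ x, llr ν μ x ∂ν) else ⊤

/-- The Hairer–Mattingly distance `d_V(u,v) = (V u + V v) 1_{u ≠ v}`. -/
noncomputable def dV {E : Type*} (V : E → ℝ) (u v : E) : ℝ :=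
  if u = v then 0 else V u + V v

/-!
Couple `μ` and `ν` by leaving their common mass in place and moving the excess `μ - ν` independently
onto the excess `ν - μ`. The cost is then at most the integral of `V` against the total variation
`(μ - ν) + (ν - μ)`, whose density with respect to `μ` is `|r - 1|` with `r = dν/dμ`. The
scalar inequality `(r - 1)² ≤ 2 max(r, 1) (r log r + 1 - r)` and Young's inequality give a pointwise
bound of the integrand, and integrating `r log r + 1 - r` against `μ` produces `KL(ν, μ)`.
-/

open InformationTheory (klFun klFun_apply klFun_nonneg klFun_zero)

section KLFun

lemma one_sub_sq_le_two_mul_klFun {r : ℝ} (hr₀ : 0 ≤ r) (hr₁ : r ≤ 1) :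
    (1 - r) ^ 2 ≤ 2 * klFun r := by
  obtain rfl | hr_pos := hr₀.eq_or_lt
  · norm_num [klFun_zero]
  have sinh_log_le : (r - r⁻¹) / 2 ≤ log r :=
    sinh_log hr_pos ▸ sinh_le_self_iff.2 (log_nonpos hr₀ hr₁)
  have mul_log_ge : (r ^ 2 - 1) / 2 ≤ r * log r :=
    calc (r ^ 2 - 1) / 2 = r * ((r - r⁻¹) / 2) := by field_simp
      _ ≤ r * log r := by gcongr
  rw [klFun_apply]
  linarith

lemma sub_one_sq_le_mul_two_mul_klFun {r : ℝ} (hr : 1 ≤ r) :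
    (r - 1) ^ 2 ≤ r * (2 * klFun r) := by
  have log_ge : 2 * (r - 1) / (r + 1) ≤ log r := by
    convert le_log_one_add_of_nonneg (sub_nonneg.2 hr) using 2 <;> ring
  have klFun_ge : (r - 1) ^ 2 / (r + 1) ≤ klFun r :=
    calc (r - 1) ^ 2 / (r + 1) = r * (2 * (r - 1) / (r + 1)) + 1 - r := by field_simp; ring
      _ ≤ r * log r + 1 - r := by gcongr
      _ = klFun r := (klFun_apply r).symm
  calc (r - 1) ^ 2 = (r + 1) * ((r - 1) ^ 2 / (r + 1)) := by field_simp
    _ ≤ (2 * r) * klFun r := by gcongr; linarith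
    _ = r * (2 * klFun r) := by ring

lemma sub_one_sq_le_max_mul_two_mul_klFun {r : ℝ} (hr : 0 ≤ r) :
    (r - 1) ^ 2 ≤ max r 1 * (2 * klFun r) := by
  obtain hr₁ | hr₁ := le_total r 1
  · rw [max_eq_right hr₁, one_mul, sub_sq_comm]
    exact one_sub_sq_le_two_mul_klFun hr hr₁
  · rw [max_eq_left hr₁]
    exact sub_one_sq_le_mul_two_mul_klFun hr₁

lemma mul_abs_sub_one_le_add_klFun {r lam : ℝ} (hr : 0 ≤ r) (hlam : 0 < lam) (a : ℝ) :
    a * |r - 1| ≤ lam / 2 * (a ^ 2 + r * a ^ 2) + lam⁻¹ * klFun r := by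
  set m := max r 1
  have m_pos : 0 < m := zero_lt_one.trans_le (le_max_right r 1)
  have m_le : m ≤ 1 + r := max_le (by linarith) (by linarith)
  have young : 2 * a * |r - 1| ≤ lam * m * a ^ 2 + (lam * m)⁻¹ * |r - 1| ^ 2 :=
    two_mul_le_add_mul_sq (by positivity)
  have quadratic_le : (lam * m)⁻¹ * |r - 1| ^ 2 ≤ 2 * (lam⁻¹ * klFun r) :=
    calc (lam * m)⁻¹ * |r - 1| ^ 2 ≤ (lam * m)⁻¹ * (m * (2 * klFun r)) := by
          rw [sq_abs]
          gcongr
          exact sub_one_sq_le_max_mul_two_mul_klFun hr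
      _ = 2 * (lam⁻¹ * klFun r) := by field_simp
  have weight_le : lam * m * a ^ 2 ≤ lam * (1 + r) * a ^ 2 := by gcongr
  linarith

end KLFun

lemma tsub_add_tsub_eq_ofReal_abs_sub {a b : ℝ≥0∞} (ha : a ≠ ∞) (hb : b ≠ ∞) :
    (a - b) + (b - a) = ENNReal.ofReal |a.toReal - b.toReal| := by
  obtain hab | hab := le_total a b
  · rw [tsub_eq_zero_of_le hab, zero_add, abs_sub_comm, ← ENNReal.toReal_sub_of_le hab hb,
      abs_of_nonneg ENNReal.toReal_nonneg, ENNReal.ofReal_toReal (ENNReal.sub_ne_top hb)]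
  · rw [tsub_eq_zero_of_le hab, add_zero, ← ENNReal.toReal_sub_of_le hab ha,
      abs_of_nonneg ENNReal.toReal_nonneg, ENNReal.ofReal_toReal (ENNReal.sub_ne_top ha)]

lemma ofReal_mul_ofReal_abs_sub_one_le {r : ℝ≥0∞} (hr : r ≠ ∞) {lam : ℝ} (hlam : 0 < lam) (a : ℝ) :
    ENNReal.ofReal a * ENNReal.ofReal |r.toReal - 1|
      ≤ ENNReal.ofReal (lam / 2) * (ENNReal.ofReal (a ^ 2) + r * ENNReal.ofReal (a ^ 2))
        + ENNReal.ofReal lam⁻¹ * ENNReal.ofReal (klFun r.toReal) := by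
  lift r to NNReal using hr
  rw [ENNReal.coe_toReal, ← ENNReal.ofReal_coe_nnreal (p := r)]
  have klFun_toReal_nonneg := klFun_nonneg r.coe_nonneg
  rw [← ENNReal.ofReal_mul' (abs_nonneg _), ← ENNReal.ofReal_mul r.coe_nonneg,
    ← ENNReal.ofReal_add (by positivity) (by positivity), ← ENNReal.ofReal_mul (by positivity),
    ← ENNReal.ofReal_mul (by positivity), ← ENNReal.ofReal_add (by positivity) (by positivity)]
  exact ENNReal.ofReal_le_ofReal (mul_abs_sub_one_le_add_klFun r.coe_nonneg hlam a)

section MeasureSub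

variable {E : Type*} [MeasurableSpace E] {μ ν : Measure E} [IsFiniteMeasure μ] [IsFiniteMeasure ν]

lemma measure_sub_add_eq_sup : μ - ν + ν = μ ⊔ ν := by
  refine le_antisymm ?_ (sup_le (Measure.sub_le_iff_le_add.1 le_rfl) (Measure.le_add_left le_rfl))
  have sup_sub_add : μ ⊔ ν - ν + ν = μ ⊔ ν := Measure.sub_add_cancel_of_le le_sup_right
  calc μ - ν + ν ≤ μ ⊔ ν - ν + ν := by
        gcongr
        exact Measure.sub_le_of_le_add (sup_sub_add.symm ▸ le_sup_left)
    _ = μ ⊔ ν := sup_sub_add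

lemma measure_sub_add_comm : μ - ν + ν = ν - μ + μ := by
  rw [measure_sub_add_eq_sup, measure_sub_add_eq_sup, sup_comm]

lemma measure_sub_sub_add_sub_swap : μ - (μ - ν) + (ν - μ) = ν := by
  have add_eq : μ - (μ - ν) + (ν - μ) + (μ - ν) = ν + (μ - ν) := by
    rw [add_right_comm, Measure.sub_add_cancel_of_le Measure.sub_le, add_comm,
      ← measure_sub_add_comm, add_comm]
  simpa only [Measure.add_sub_cancel] using congrArg (· - (μ - ν)) add_eq

lemma measure_sub_univ_eq_of_univ_eq (hmass : μ Set.univ = ν Set.univ) :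
    (μ - ν) Set.univ = (ν - μ) Set.univ := by
  have add_eq := congrArg (· Set.univ) (measure_sub_add_comm (μ := μ) (ν := ν))
  simp only [Measure.add_apply, hmass] at add_eq
  exact (ENNReal.add_left_inj (measure_ne_top ν _)).1 add_eq

lemma measure_sub_eq_withDensity_one_sub_rnDeriv (hac : ν ≪ μ) :
    μ - ν = μ.withDensity (1 - ν.rnDeriv μ) := by
  rw [Measure.withDensity_sub measurable_one (Measure.measurable_rnDeriv ν μ), withDensity_one,
    Measure.withDensity_rnDeriv_eq ν μ hac]

lemma measure_sub_eq_withDensity_rnDeriv_sub_one (hac : ν ≪ μ) :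
    ν - μ = μ.withDensity (ν.rnDeriv μ - 1) := by
  have : IsFiniteMeasure (μ.withDensity 1) := by rw [withDensity_one]; infer_instance
  rw [Measure.withDensity_sub (Measure.measurable_rnDeriv ν μ) measurable_one, withDensity_one,
    Measure.withDensity_rnDeriv_eq ν μ hac]

lemma lintegral_measure_sub_add_lintegral_measure_sub (hac : ν ≪ μ) {g : E → ℝ≥0∞}
    (hg : Measurable g) :
    ∫⁻ x, g x ∂(μ - ν) + ∫⁻ x, g x ∂(ν - μ)
      = ∫⁻ x, g x * ENNReal.ofReal |(ν.rnDeriv μ x).toReal - 1| ∂μ := by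
  have density_measurable := Measure.measurable_rnDeriv ν μ
  have excess_measurable : Measurable (1 - ν.rnDeriv μ) := measurable_one.sub density_measurable
  rw [measure_sub_eq_withDensity_one_sub_rnDeriv hac,
    measure_sub_eq_withDensity_rnDeriv_sub_one hac,
    lintegral_withDensity_eq_lintegral_mul _ excess_measurable hg,
    lintegral_withDensity_eq_lintegral_mul _ (density_measurable.sub measurable_one) hg,
    ← lintegral_add_left (excess_measurable.mul hg)]
  refine lintegral_congr_ae ?_
  filter_upwards [Measure.rnDeriv_ne_top ν μ] with x hx
  simp only [Pi.mul_apply, Pi.sub_apply, Pi.one_apply]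
  rw [← add_mul, add_comm, tsub_add_tsub_eq_ofReal_abs_sub hx one_ne_top, ENNReal.toReal_one,
    mul_comm]

end MeasureSub

section WeightedPinsker

variable {E : Type*} [MeasurableSpace E] {μ ν : Measure E}

lemma klDiv_eq_informationTheory_klDiv (hmass : μ Set.univ = ν Set.univ) :
    klDiv ν μ = InformationTheory.klDiv ν μ := by
  rw [klDiv, InformationTheory.klDiv_def, Measure.real, Measure.real, hmass]
  simp only [add_sub_cancel_right]

variable [IsFiniteMeasure μ] [IsFiniteMeasure ν]

theorem weighted_pinsker (hmass : μ Set.univ = ν Set.univ) {a : E → ℝ} (ha : Measurable a)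
    {lam : ℝ} (hlam : 0 < lam) :
    ∫⁻ x, ENNReal.ofReal (a x) ∂(μ - ν) + ∫⁻ x, ENNReal.ofReal (a x) ∂(ν - μ)
      ≤ ENNReal.ofReal (lam / 2) *
          (∫⁻ x, ENNReal.ofReal (a x ^ 2) ∂μ + ∫⁻ x, ENNReal.ofReal (a x ^ 2) ∂ν)
        + ENNReal.ofReal lam⁻¹ * klDiv ν μ := by
  rw [klDiv_eq_informationTheory_klDiv hmass]
  by_cases hac : ν ≪ μ
  swap
  · simp [InformationTheory.klDiv_of_not_ac hac, ENNReal.mul_top, hlam]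
  rw [InformationTheory.klDiv_eq_lintegral_klFun_of_ac hac,
    lintegral_measure_sub_add_lintegral_measure_sub hac (by fun_prop),
    ← lintegral_rnDeriv_mul hac (by fun_prop), ← lintegral_add_left (by fun_prop),
    ← lintegral_const_mul _ (by fun_prop), ← lintegral_const_mul _ (by fun_prop),
    ← lintegral_add_left (by fun_prop)]
  refine lintegral_mono_ae ?_
  filter_upwards [Measure.rnDeriv_ne_top ν μ] with x hx
  exact ofReal_mul_ofReal_abs_sub_one_le hx hlam (a x)

end WeightedPinsker

section Coupling

variable {E : Type*} [MeasurableSpace E]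

lemma map_fst_inv_univ_smul_prod {F : Type*} [MeasurableSpace F] {α : Measure E} {β : Measure F}
    [IsFiniteMeasure α] [IsFiniteMeasure β] (hmass : α Set.univ = β Set.univ) :
    ((α Set.univ)⁻¹ • α.prod β).map Prod.fst = α := by
  rw [Measure.map_smul, Measure.map_fst_prod, ← hmass, smul_smul]
  obtain rfl | hα := eq_or_ne α 0
  · simp
  · rw [ENNReal.inv_mul_cancel (Measure.measure_univ_ne_zero.2 hα) (measure_ne_top α _), one_smul]

lemma map_snd_inv_univ_smul_prod {F : Type*} [MeasurableSpace F] {α : Measure E} {β : Measure F}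
    [IsFiniteMeasure α] [IsFiniteMeasure β] (hmass : α Set.univ = β Set.univ) :
    ((α Set.univ)⁻¹ • α.prod β).map Prod.snd = β := by
  rw [Measure.map_smul, Measure.map_snd_prod, hmass, smul_smul]
  obtain rfl | hβ := eq_or_ne β 0
  · simp
  · rw [ENNReal.inv_mul_cancel (Measure.measure_univ_ne_zero.2 hβ) (measure_ne_top β _), one_smul]

/-- The maximal coupling of two finite measures of equal mass. The common part `μ ⊓ ν`, written
`μ - (μ - ν)`, is kept on the diagonal and the excess `μ - ν` is coupled independently with the
excess `ν - μ`. If `μ = ν` the normalising factor is `∞`, but it multiplies the zero measure. -/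
noncomputable def maximalCoupling (μ ν : Measure E) : Measure (E × E) :=
  (μ - (μ - ν)).map (fun x => (x, x)) + ((μ - ν) Set.univ)⁻¹ • (μ - ν).prod (ν - μ)

variable {μ ν : Measure E} [IsFiniteMeasure μ] [IsFiniteMeasure ν]

lemma map_fst_maximalCoupling (hmass : μ Set.univ = ν Set.univ) :
    (maximalCoupling μ ν).map Prod.fst = μ := by
  have diag_measurable : Measurable fun x : E => (x, x) := by fun_prop
  rw [maximalCoupling, Measure.map_add _ _ measurable_fst,
    map_fst_inv_univ_smul_prod (measure_sub_univ_eq_of_univ_eq hmass),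
    Measure.map_map measurable_fst diag_measurable]
  exact Measure.map_id.symm ▸ Measure.sub_add_cancel_of_le Measure.sub_le

lemma map_snd_maximalCoupling (hmass : μ Set.univ = ν Set.univ) :
    (maximalCoupling μ ν).map Prod.snd = ν := by
  have diag_measurable : Measurable fun x : E => (x, x) := by fun_prop
  rw [maximalCoupling, Measure.map_add _ _ measurable_snd,
    map_snd_inv_univ_smul_prod (measure_sub_univ_eq_of_univ_eq hmass),
    Measure.map_map measurable_snd diag_measurable]
  exact Measure.map_id.symm ▸ measure_sub_sub_add_sub_swap

lemma lintegral_maximalCoupling_le (hmass : μ Set.univ = ν Set.univ) {cost : E × E → ℝ≥0∞}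
    {f g : E → ℝ≥0∞} (hf : Measurable f) (hg : Measurable g) (cost_diag : ∀ x, cost (x, x) = 0)
    (cost_le : ∀ x y, cost (x, y) ≤ f x + g y) :
    ∫⁻ p, cost p ∂maximalCoupling μ ν ≤ ∫⁻ x, f x ∂(μ - ν) + ∫⁻ x, g x ∂(ν - μ) := by
  set q := ((μ - ν) Set.univ)⁻¹ • (μ - ν).prod (ν - μ) with hq
  have excess_mass := measure_sub_univ_eq_of_univ_eq hmass
  have lintegral_diag : ∫⁻ p, cost p ∂(μ - (μ - ν)).map (fun x => (x, x)) = 0 :=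
    le_antisymm ((lintegral_map_le _ _).trans (by simp [cost_diag])) zero_le
  calc ∫⁻ p, cost p ∂maximalCoupling μ ν = ∫⁻ p, cost p ∂q := by
        rw [maximalCoupling, lintegral_add_measure, lintegral_diag, zero_add]
    _ ≤ ∫⁻ p, f p.1 + g p.2 ∂q := lintegral_mono fun p => cost_le p.1 p.2
    _ = ∫⁻ p, f p.1 ∂q + ∫⁻ p, g p.2 ∂q := lintegral_add_left (by fun_prop) _
    _ = ∫⁻ x, f x ∂q.map Prod.fst + ∫⁻ x, g x ∂q.map Prod.snd := by
        rw [lintegral_map hf measurable_fst, lintegral_map hg measurable_snd]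
    _ = ∫⁻ x, f x ∂(μ - ν) + ∫⁻ x, g x ∂(ν - μ) := by
        rw [hq, map_fst_inv_univ_smul_prod excess_mass, map_snd_inv_univ_smul_prod excess_mass]

end Coupling

lemma dV_self {E : Type*} (V : E → ℝ) (u : E) : dV V u u = 0 := if_pos rfl

lemma ofReal_dV_le {E : Type*} (V : E → ℝ) (u v : E) :
    ENNReal.ofReal (dV V u v) ≤ ENNReal.ofReal (V u) + ENNReal.ofReal (V v) := by
  unfold dV
  split_ifs
  · simp
  · exact ENNReal.ofReal_add_le

lemma iInf_lintegral_dV_le {E : Type*} [MeasurableSpace E] {μ ν : Measure E}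
    [IsProbabilityMeasure μ] [IsProbabilityMeasure ν] {V : E → ℝ} (hV : Measurable V) :
    (⨅ (pc : Measure (E × E)) (_ : IsProbabilityMeasure pc)
        (_ : pc.map Prod.fst = μ) (_ : pc.map Prod.snd = ν),
      ∫⁻ p, ENNReal.ofReal (dV V p.1 p.2) ∂pc)
    ≤ ∫⁻ x, ENNReal.ofReal (V x) ∂(μ - ν) + ∫⁻ x, ENNReal.ofReal (V x) ∂(ν - μ) := by
  have hmass : μ Set.univ = ν Set.univ := by rw [measure_univ, measure_univ]
  have marginal_fst := map_fst_maximalCoupling hmass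
  have marginal_snd := map_snd_maximalCoupling hmass
  have prob : IsProbabilityMeasure (maximalCoupling μ ν) :=
    (Measure.isProbabilityMeasure_map_iff measurable_fst.aemeasurable).1 (by rwa [marginal_fst])
  have cost_le := lintegral_maximalCoupling_le hmass
    (cost := fun p => ENNReal.ofReal (dV V p.1 p.2))
    hV.ennreal_ofReal hV.ennreal_ofReal (by simp [dV_self]) (ofReal_dV_le V)
  exact iInf₂_le_of_le _ prob (iInf₂_le_of_le marginal_fst marginal_snd cost_le)

lemma lintegral_ofReal_const_mul_sq {E : Type*} [MeasurableSpace E] {μ : Measure E} {V : E → ℝ}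
    (hV : Integrable (fun x => V x ^ 2) μ) (c : ℝ) :
    ∫⁻ x, ENNReal.ofReal ((c * V x) ^ 2) ∂μ = ENNReal.ofReal (c ^ 2 * ∫ x, V x ^ 2 ∂μ) := by
  simp_rw [mul_pow]
  rw [← ofReal_integral_eq_lintegral_ofReal (hV.const_mul _) (ae_of_all _ fun x => by positivity),
    integral_const_mul]

/-- Where `V` takes negative values, the transported cost is the positive part of `d_V`. -/
theorem one_step_transport_estimate_general
    {E : Type*} [MeasurableSpace E]
    (μ ν : Measure E) [IsProbabilityMeasure μ] [IsProbabilityMeasure ν]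
    (V : E → ℝ) (hVmeas : Measurable V)
    (hV2μ : Integrable (fun x => (V x) ^ 2) μ)
    (hV2ν : Integrable (fun x => (V x) ^ 2) ν)
    (c lam : ℝ) (hc : 0 ≤ c) (hlam : 0 < lam) :
    ENNReal.ofReal c *
        (⨅ (pc : Measure (E × E)) (_ : IsProbabilityMeasure pc)
            (_ : pc.map Prod.fst = μ) (_ : pc.map Prod.snd = ν),
          ∫⁻ p, ENNReal.ofReal (dV V p.1 p.2) ∂pc)
      ≤ ENNReal.ofReal (lam * c ^ 2 / 2 *
            ((∫ x, (V x) ^ 2 ∂μ) + ∫ x, (V x) ^ 2 ∂ν))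
        + ENNReal.ofReal lam⁻¹ * klDiv ν μ := by
  have hmass : μ Set.univ = ν Set.univ := by rw [measure_univ, measure_univ]
  calc _ ≤ ENNReal.ofReal c * (∫⁻ x, ENNReal.ofReal (V x) ∂(μ - ν)
            + ∫⁻ x, ENNReal.ofReal (V x) ∂(ν - μ)) := by
        gcongr
        exact iInf_lintegral_dV_le hVmeas
    _ = ∫⁻ x, ENNReal.ofReal (c * V x) ∂(μ - ν) + ∫⁻ x, ENNReal.ofReal (c * V x) ∂(ν - μ) := by
        simp_rw [ENNReal.ofReal_mul hc]
        rw [lintegral_const_mul _ (by fun_prop), lintegral_const_mul _ (by fun_prop), mul_add]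
    _ ≤ ENNReal.ofReal (lam / 2) * (∫⁻ x, ENNReal.ofReal ((c * V x) ^ 2) ∂μ
            + ∫⁻ x, ENNReal.ofReal ((c * V x) ^ 2) ∂ν) + ENNReal.ofReal lam⁻¹ * klDiv ν μ :=
        weighted_pinsker hmass (hVmeas.const_mul c) hlam
    _ = _ := by
        rw [lintegral_ofReal_const_mul_sq hV2μ, lintegral_ofReal_const_mul_sq hV2ν,
          ← ENNReal.ofReal_add (by positivity) (by positivity),
          ← ENNReal.ofReal_mul (by positivity)]
        ring_nf

/-- One-step transportation-cost estimate of the paper (via Cauchy–Schwarz, Young and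
the improved Marton coupling inequality): for probability measures `μ, ν` with
`∫ V² dμ, ∫ V² dν < ∞` and all `c, λ > 0`,
`c W_{1,d_V}(μ, ν) ≤ (λ c²/2)(∫ V² dμ + ∫ V² dν) + λ⁻¹ KL(ν, μ)`,
where `W_{1,d_V}(μ,ν)` is the infimum of `E_π[d_V(X,Y)]` over couplings `π`. -/
theorem one_step_transport_estimate
    {E : Type*} [MeasurableSpace E]
    (μ ν : Measure E) [IsProbabilityMeasure μ] [IsProbabilityMeasure ν]
    (V : E → ℝ) (hVmeas : Measurable V) (hV1 : ∀ x, 1 ≤ V x)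
    (hV2μ : Integrable (fun x => (V x) ^ 2) μ)
    (hV2ν : Integrable (fun x => (V x) ^ 2) ν)
    (c lam : ℝ) (hc : 0 < c) (hlam : 0 < lam) :
    ENNReal.ofReal c *
        (⨅ (pc : Measure (E × E)) (_ : IsProbabilityMeasure pc)
            (_ : pc.map Prod.fst = μ) (_ : pc.map Prod.snd = ν),
          ∫⁻ p, ENNReal.ofReal (dV V p.1 p.2) ∂pc)
      ≤ ENNReal.ofReal (lam * c ^ 2 / 2 *
            ((∫ x, (V x) ^ 2 ∂μ) + ∫ x, (V x) ^ 2 ∂ν))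
        + ENNReal.ofReal lam⁻¹ * klDiv ν μ := by
  exact one_step_transport_estimate_general μ ν V hVmeas hV2μ hV2ν c lam hc.le hlam
end

section
/- Let Z be a real random variable whose distribution is symmetric (Z and −Z have the same law) and let c ≤ 0. Then for every x ∈ ℝ, E[ ( e^{c(|x+Z| − |x|)} − 1 ) · 1_{|x+Z| > |x|} ] ≤ ( E[e^{c|Z|}] − 1 )/2. -/
open MeasureTheory ProbabilityTheory ENNReal
open scoped Classical

/-!
For each `z`, one of the steps `z` and `-z` points away from the origin as seen from `x`, so that it
increases `|x|` by exactly `|z|`. The integrand at that step is `e^{c|z|} - 1`, and at the opposite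
step it is nonpositive. Hence the sum of the integrand over `z` and `-z` is at most `e^{c|z|} - 1`,
and averaging over the symmetric law produces the factor `1/2`.
-/

section LinearOrderedAddCommGroup

variable {α : Type*} [AddCommGroup α] [LinearOrder α] [IsOrderedAddMonoid α]

lemma abs_add_eq_or_abs_sub_eq (x z : α) : |x + z| = |x| + |z| ∨ |x - z| = |x| + |z| := by
  have abs_sub_eq_iff : |x - z| = |x| + |z| ↔ 0 ≤ x ∧ z ≤ 0 ∨ x ≤ 0 ∧ 0 ≤ z := by
    simpa only [← sub_eq_add_neg, abs_neg, neg_nonneg, neg_nonpos]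
      using abs_add_eq_add_abs_iff x (-z)
  rw [abs_add_eq_add_abs_iff, abs_sub_eq_iff]
  grind

lemma apply_posPart_sub_eq_ite {M : Type*} [Zero M] {h : α → M} (h_zero : h 0 = 0) (a b : α) :
    h (a - b)⁺ = if b < a then h (a - b) else 0 := by
  split_ifs with hba
  · rw [posPart_eq_self.2 (sub_nonneg.2 hba.le)]
  · rw [posPart_eq_zero.2 (sub_nonpos.2 (not_lt.1 hba)), h_zero]

lemma apply_posPart_abs_add_sub_abs_add_le {M : Type*} [AddCommMonoid M] [PartialOrder M]
    [IsOrderedAddMonoid M] {h : α → M} (h_nonpos : ∀ t, 0 ≤ t → h t ≤ 0) (x z : α) :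
    h (|x + z| - |x|)⁺ + h (|x - z| - |x|)⁺ ≤ h |z| := by
  have posPart_eq_of_outward {w : α} (hw : |w| = |x| + |z|) : (|w| - |x|)⁺ = |z| := by
    rw [hw, add_sub_cancel_left, posPart_eq_self.2 (abs_nonneg z)]
  rcases abs_add_eq_or_abs_sub_eq x z with hz | hz
  · rw [posPart_eq_of_outward hz]
    exact add_le_of_nonpos_right (h_nonpos _ (posPart_nonneg _))
  · rw [posPart_eq_of_outward hz]
    exact add_le_of_nonpos_left (h_nonpos _ (posPart_nonneg _))

end LinearOrderedAddCommGroup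

lemma integral_le_half_integral_of_add_comp_neg_le {G : Type*} [MeasurableSpace G]
    [AddGroup G] [MeasurableNeg G] {μ : Measure G} [μ.IsNegInvariant] {f g : G → ℝ}
    (hf : Integrable f μ) (hg : Integrable g μ) (hfg : ∀ᵐ z ∂μ, f z + f (-z) ≤ g z) :
    ∫ z, f z ∂μ ≤ (∫ z, g z ∂μ) / 2 := by
  have two_mul_le : 2 * ∫ z, f z ∂μ ≤ ∫ z, g z ∂μ :=
    calc 2 * ∫ z, f z ∂μ = ∫ z, f z ∂μ + ∫ z, f (-z) ∂μ := by
          rw [integral_neg_eq_self f μ, two_mul]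
      _ = ∫ z, (f z + f (-z)) ∂μ := (integral_add hf hf.comp_neg).symm
      _ ≤ ∫ z, g z ∂μ := integral_mono_ae (hf.add hf.comp_neg) hg hfg
  linarith

lemma integral_apply_posPart_abs_add_sub_abs_le {α : Type*} [AddCommGroup α] [LinearOrder α]
    [IsOrderedAddMonoid α] [MeasurableSpace α] [MeasurableNeg α] {μ : Measure α}
    [μ.IsNegInvariant] {h : α → ℝ} (h_nonpos : ∀ t, 0 ≤ t → h t ≤ 0) {x : α}
    (h_posPart_int : Integrable (fun z ↦ h (|x + z| - |x|)⁺) μ)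
    (h_abs_int : Integrable (fun z ↦ h |z|) μ) :
    ∫ z, h (|x + z| - |x|)⁺ ∂μ ≤ (∫ z, h |z| ∂μ) / 2 :=
  integral_le_half_integral_of_add_comp_neg_le h_posPart_int h_abs_int <| ae_of_all μ fun z ↦ by
    simpa only [← sub_eq_add_neg] using apply_posPart_abs_add_sub_abs_add_le h_nonpos x z

lemma integrable_exp_mul_of_nonpos_of_nonneg {Ω : Type*} [MeasurableSpace Ω] {μ : Measure Ω}
    [IsFiniteMeasure μ] {c : ℝ} (hc : c ≤ 0) {X : Ω → ℝ} (hX : AEMeasurable X μ)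
    (hX_nonneg : 0 ≤ᵐ[μ] X) : Integrable (fun ω ↦ Real.exp (c * X ω)) μ := by
  have neg_le_zero : ∀ᵐ ω ∂μ, (-X) ω ≤ 0 := hX_nonneg.mono fun _ ↦ neg_nonpos.2
  simpa only [Pi.neg_apply, neg_mul_neg] using
    integrable_exp_mul_of_le (-c) 0 (neg_nonneg.2 hc) hX.neg neg_le_zero

/-- The elementary symmetry estimate in the verification of the drift condition for the
Random Walk Metropolis chain: if the law of `Z` is symmetric and `c ≤ 0`, then for every
`x`, `E[(e^{c(|x+Z|−|x|)} − 1) 1_{|x+Z| > |x|}] ≤ (E[e^{c|Z|}] − 1)/2`. -/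
theorem symmetric_tail_estimate
    (μ : Measure ℝ) [IsProbabilityMeasure μ]
    (hsymm : μ.map (fun z => -z) = μ)
    (c : ℝ) (hc : c ≤ 0) (x : ℝ) :
    ∫ z, (if |x| < |x + z| then Real.exp (c * (|x + z| - |x|)) - 1 else 0) ∂μ
      ≤ ((∫ z, Real.exp (c * |z|) ∂μ) - 1) / 2 := by
  have : μ.IsNegInvariant := ⟨hsymm⟩
  let h : ℝ → ℝ := fun t ↦ Real.exp (c * t) - 1
  have h_zero : h 0 = 0 := by simp [h]
  have h_nonpos (t : ℝ) (ht : 0 ≤ t) : h t ≤ 0 :=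
    sub_nonpos.2 (Real.exp_le_one_iff.2 (mul_nonpos_of_nonpos_of_nonneg hc ht))
  have exp_abs_int : Integrable (fun z ↦ Real.exp (c * |z|)) μ :=
    integrable_exp_mul_of_nonpos_of_nonneg hc (by fun_prop) (ae_of_all _ abs_nonneg)
  have exp_posPart_int : Integrable (fun z ↦ Real.exp (c * (|x + z| - |x|)⁺)) μ :=
    integrable_exp_mul_of_nonpos_of_nonneg hc (by fun_prop) (ae_of_all _ fun _ ↦ posPart_nonneg _)
  calc ∫ z, (if |x| < |x + z| then h (|x + z| - |x|) else 0) ∂μ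
      = ∫ z, h (|x + z| - |x|)⁺ ∂μ := by simp_rw [apply_posPart_sub_eq_ite h_zero]
    _ ≤ (∫ z, h |z| ∂μ) / 2 :=
        integral_apply_posPart_abs_add_sub_abs_le h_nonpos
          (exp_posPart_int.sub (integrable_const 1)) (exp_abs_int.sub (integrable_const 1))
    _ = ((∫ z, Real.exp (c * |z|) ∂μ) - 1) / 2 := by
        rw [integral_sub exp_abs_int (integrable_const 1), integral_const, probReal_univ, one_smul]
end
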